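/- arXiv:1503.03670 — 2 statements merged into one kernel-verified Lean document; each statement's English description precedes it below -/
import Mathlib

section
/- Let a²,b²,c² > 0, k ∈ ℤ∖{0}, and let w₀, w₁, w₂ ∈ C²((0,∞)) be such that the map Q(x) = w₀(r)E₀ + w₁(r)E₁(φ) + w₂(r)E₂(φ) extends to a C² map on ℝ² and satisfies ΔQ = −a²Q − b²(Q² − (1/3)|Q|²I₃) + c²|Q|²Q on ℝ², with lim_{r→∞} w₁(r) = s₊/√2 and lim_{r→∞} w₂(r) = 0. Then w₂ ≡ 0 on (0,∞), i.e. Q(x) = w₀(r)E₀ + w₁(r)E₁(φ) for all x. -/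
open Real Matrix
open scoped ENNReal

noncomputable section

abbrev Mat3 := Matrix (Fin 3) (Fin 3) ℝ

/-- `Q` is a symmetric traceless 3×3 real matrix, i.e. an element of `S₀`. -/
def isS0 (Q : Mat3) : Prop := Qᵀ = Q ∧ Q.trace = 0

def e1 : Fin 3 → ℝ := ![1, 0, 0]
def e2 : Fin 3 → ℝ := ![0, 1, 0]
def e3 : Fin 3 → ℝ := ![0, 0, 1]

/-- `n(φ) = (cos(kφ/2), sin(kφ/2), 0)`. -/
def nvec (k : ℤ) (φ : ℝ) : Fin 3 → ℝ := ![Real.cos ((k : ℝ) * φ / 2), Real.sin ((k : ℝ) * φ / 2), 0]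

/-- `m(φ) = (−sin(kφ/2), cos(kφ/2), 0)`. -/
def mvec (k : ℤ) (φ : ℝ) : Fin 3 → ℝ := ![-Real.sin ((k : ℝ) * φ / 2), Real.cos ((k : ℝ) * φ / 2), 0]

/-- `I₂ = I₃ − e₃ ⊗ e₃`. -/
def I2 : Mat3 := 1 - vecMulVec e3 e3

def E0 : Mat3 := Real.sqrt (3/2) • (vecMulVec e3 e3 - (1/3 : ℝ) • (1 : Mat3))
def E1 (k : ℤ) (φ : ℝ) : Mat3 :=
  Real.sqrt 2 • (vecMulVec (nvec k φ) (nvec k φ) - (1/2 : ℝ) • I2)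
def E2mat (k : ℤ) (φ : ℝ) : Mat3 :=
  (Real.sqrt 2)⁻¹ • (vecMulVec (nvec k φ) (mvec k φ) + vecMulVec (mvec k φ) (nvec k φ))
def E3mat : Mat3 := (Real.sqrt 2)⁻¹ • (vecMulVec e1 e3 + vecMulVec e3 e1)
def E4mat : Mat3 := (Real.sqrt 2)⁻¹ • (vecMulVec e2 e3 + vecMulVec e3 e2)

/-- The rotation `R_k(ψ)` of winding `k/2` about the vertical axis. -/
def Rk (k : ℤ) (ψ : ℝ) : Mat3 :=
  !![Real.cos ((k : ℝ) * ψ / 2), -Real.sin ((k : ℝ) * ψ / 2), 0;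
     Real.sin ((k : ℝ) * ψ / 2),  Real.cos ((k : ℝ) * ψ / 2), 0;
     0, 0, 1]

/-- The Landau-de Gennes bulk potential. -/
def fbulk (a2 b2 c2 : ℝ) (Q : Mat3) : ℝ :=
  -(a2/2) * (Q*Q).trace - (b2/3) * (Q*Q*Q).trace + (c2/4) * ((Q*Q).trace)^2

/-- The constant `s₊ = (b² + √(b⁴ + 24a²c²))/(4c²)`. -/
def splus (a2 b2 c2 : ℝ) : ℝ := (b2 + Real.sqrt (b2^2 + 24*a2*c2)) / (4*c2)

/-- Laplacian of a scalar function on `ℝ²`, as the sum of the two repeated partial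
derivatives along the coordinate axes. -/
def lap (f : ℝ × ℝ → ℝ) (p : ℝ × ℝ) : ℝ :=
  deriv (fun t => deriv (fun s => f (s, p.2)) t) p.1 +
  deriv (fun t => deriv (fun s => f (p.1, s)) t) p.2

/-- Componentwise Laplacian of a matrix-valued map on `ℝ²`. -/
def matLap (Q : ℝ × ℝ → Mat3) (p : ℝ × ℝ) : Mat3 :=
  Matrix.of fun i j => lap (fun x => Q x i j) p

/-- Squared norm of the gradient of a scalar function on `ℝ²`. -/
def gradNormSq (f : ℝ × ℝ → ℝ) (p : ℝ × ℝ) : ℝ :=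
  (fderiv ℝ f p (1, 0))^2 + (fderiv ℝ f p (0, 1))^2

/-- `|∇Q|²`: sum over all matrix entries of the squared norms of their gradients. -/
def matGradNormSq (Q : ℝ × ℝ → Mat3) (p : ℝ × ℝ) : ℝ :=
  ∑ i, ∑ j, gradNormSq (fun x => Q x i j) p

/-- Membership in the open disk of radius `R ∈ (0,∞]` centered at the origin. -/
def inBall (R : ℝ≥0∞) (x : ℝ × ℝ) : Prop :=
  ENNReal.ofReal (Real.sqrt (x.1^2 + x.2^2)) < R

/-- The right-hand side of the Euler–Lagrange equation
`ΔQ = −a²Q − b²(Q² − (1/3)|Q|²I₃) + c²|Q|²Q`. -/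
def ELrhs (a2 b2 c2 : ℝ) (A : Mat3) : Mat3 :=
  -a2 • A - b2 • (A * A - ((1/3 : ℝ) * (A * A).trace) • (1 : Mat3)) + (c2 * (A * A).trace) • A

/-- Frobenius squared norm of a 3×3 matrix. -/
def frobSq (A : Mat3) : ℝ := ∑ i, ∑ j, (A i j)^2

/-- For `x = (x₁,x₂) ∈ ℝ²`, `x̃ = (x₁,x₂,0) ∈ ℝ³`. -/
def tilde (x : ℝ × ℝ) : Fin 3 → ℝ := ![x.1, x.2, 0]

/-- The projection `P₂(x₁,x₂,x₃) = (x₁,x₂)`. -/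
def P2 (v : Fin 3 → ℝ) : ℝ × ℝ := (v 0, v 1)

/-- The antisymmetric matrix `S₀ = e₂⊗e₁ − e₁⊗e₂`. -/
def S0mat : Mat3 := vecMulVec e2 e1 - vecMulVec e1 e2

end

/-! The difference `Q₀₀ - Q₁₁` and the entry `Q₀₁` are Fourier modes of frequency `k` in the polar
angle, and the Euler–Lagrange equation multiplies both by the same scalar `μ(Q)`. Their restrictions
`u = √2 w₁` and `v = w₂ / √2` to a ray therefore solve the same linear equation
`y'' + y' / r = (μ + k² / r²) y`. The Wronskian expression `r (u v' - v u')` is constant, and it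
vanishes at the origin since `u` and `v` are `C¹` there. Hence `v` is a multiple of `u`, and letting
`r → ∞` shows that the factor is zero. -/

section PolarLaplacian

variable {E F : Type*} [NormedAddCommGroup E] [NormedSpace ℝ E]
  [NormedAddCommGroup F] [NormedSpace ℝ F]

lemma deriv_deriv_comp_curve {f : E → F} (hf : ContDiff ℝ 2 f) {γ γ' : ℝ → E} {γ'' : E} {t : ℝ}
    (hγ : ∀ s, HasDerivAt γ (γ' s) s) (hγ' : HasDerivAt γ' γ'' t) :
    deriv (deriv fun s => f (γ s)) t =
      fderiv ℝ (fderiv ℝ f) (γ t) (γ' t) (γ' t) + fderiv ℝ f (γ t) γ'' := by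
  have hfirst : (deriv fun s => f (γ s)) = fun s => fderiv ℝ f (γ s) (γ' s) := funext fun s =>
    ((hf.differentiable two_ne_zero (γ s)).hasFDerivAt.comp_hasDerivAt s (hγ s)).deriv
  have hfderiv : HasDerivAt (fun s => fderiv ℝ f (γ s)) (fderiv ℝ (fderiv ℝ f) (γ t) (γ' t)) t :=
    ((hf.fderiv_right (m := 1) le_rfl).differentiable one_ne_zero (γ t)).hasFDerivAt.comp_hasDerivAt
      t (hγ t)
  rw [hfirst]
  exact (hfderiv.clm_apply hγ').deriv

variable {f g : ℝ × ℝ → ℝ}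

lemma lap_eq_fderiv_fderiv (hf : ContDiff ℝ 2 f) (p : ℝ × ℝ) :
    lap f p = fderiv ℝ (fderiv ℝ f) p (1, 0) (1, 0) + fderiv ℝ (fderiv ℝ f) p (0, 1) (0, 1) := by
  have hhor := deriv_deriv_comp_curve hf (t := p.1)
    (fun s => (hasDerivAt_id s).prodMk (hasDerivAt_const s p.2)) (hasDerivAt_const p.1 (1, 0))
  have hvert := deriv_deriv_comp_curve hf (t := p.2)
    (fun s => (hasDerivAt_const s p.1).prodMk (hasDerivAt_id s)) (hasDerivAt_const p.2 (0, 1))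
  simp only [id_eq, map_zero, add_zero] at hhor hvert
  exact congrArg₂ (· + ·) hhor hvert

lemma lap_sub (hf : ContDiff ℝ 2 f) (hg : ContDiff ℝ 2 g) (p : ℝ × ℝ) :
    lap (fun x => f x - g x) p = lap f p - lap g p := by
  have hfirst : fderiv ℝ (fun x => f x - g x) = fun x => fderiv ℝ f x - fderiv ℝ g x :=
    funext fun x => fderiv_fun_sub (hf.differentiable two_ne_zero x)
      (hg.differentiable two_ne_zero x)
  have hsecond : fderiv ℝ (fun x => fderiv ℝ f x - fderiv ℝ g x) p =
      fderiv ℝ (fderiv ℝ f) p - fderiv ℝ (fderiv ℝ g) p :=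
    fderiv_fun_sub ((hf.fderiv_right (m := 1) le_rfl).differentiable one_ne_zero p)
      ((hg.fderiv_right (m := 1) le_rfl).differentiable one_ne_zero p)
  rw [lap_eq_fderiv_fderiv (hf.sub hg), lap_eq_fderiv_fderiv hf, lap_eq_fderiv_fderiv hg, hfirst,
    hsecond]
  simp only [_root_.sub_apply]
  ring

lemma lap_polar (hf : ContDiff ℝ 2 f) {r : ℝ} (hr : r ≠ 0) (θ : ℝ) :
    lap f (r * cos θ, r * sin θ) =
      deriv (deriv fun t => f (t * cos θ, t * sin θ)) r +
        r⁻¹ * deriv (fun t => f (t * cos θ, t * sin θ)) r +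
        (r ^ 2)⁻¹ * deriv (deriv fun φ => f (r * cos φ, r * sin φ)) θ := by
  have hray (t : ℝ) : HasDerivAt (fun t => (t * cos θ, t * sin θ)) (cos θ, sin θ) t := by
    simpa using ((hasDerivAt_id t).mul_const (cos θ)).prodMk ((hasDerivAt_id t).mul_const (sin θ))
  have hcircle (φ : ℝ) :
      HasDerivAt (fun φ => (r * cos φ, r * sin φ)) (r * -sin φ, r * cos φ) φ :=
    ((hasDerivAt_cos φ).const_mul r).prodMk ((hasDerivAt_sin φ).const_mul r)
  have hcircle' :
      HasDerivAt (fun φ => (r * -sin φ, r * cos φ)) (r * -cos θ, r * -sin θ) θ :=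
    ((hasDerivAt_sin θ).neg.const_mul r).prodMk ((hasDerivAt_cos θ).const_mul r)
  have hradial : deriv (fun t => f (t * cos θ, t * sin θ)) r =
      fderiv ℝ f (r * cos θ, r * sin θ) (cos θ, sin θ) :=
    ((hf.differentiable two_ne_zero _).hasFDerivAt.comp_hasDerivAt r (hray r)).deriv
  have hcoord (x y : ℝ) : ((x, y) : ℝ × ℝ) = x • (1, 0) + y • (0, 1) := by simp
  rw [lap_eq_fderiv_fderiv hf, hradial, deriv_deriv_comp_curve hf hray (hasDerivAt_const r _),
    deriv_deriv_comp_curve hf hcircle hcircle', hcoord (cos θ), hcoord (r * -sin θ),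
    hcoord (r * -cos θ)]
  simp only [map_add, map_smul, _root_.add_apply, _root_.smul_apply, smul_eq_mul, map_zero]
  field_simp
  linear_combination -(r * (fderiv ℝ (fderiv ℝ f) (r * cos θ, r * sin θ) (1, 0) (1, 0) +
    fderiv ℝ (fderiv ℝ f) (r * cos θ, r * sin θ) (0, 1) (0, 1))) * sin_sq_add_cos_sq θ

lemma deriv_fourierMode (κ a b : ℝ) :
    (deriv fun φ => a * cos (κ * φ) + b * sin (κ * φ)) =
      fun φ => κ * b * cos (κ * φ) + -(κ * a) * sin (κ * φ) := by
  funext φ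
  have hmul : HasDerivAt (fun φ => κ * φ) κ φ := by simpa using (hasDerivAt_id φ).const_mul κ
  exact (((hmul.cos.const_mul a).add (hmul.sin.const_mul b)).congr_deriv (by ring)).deriv

end PolarLaplacian

section LinearODE

open Set

lemma eqOn_zero_of_hasDerivAt_clm {E : Type*} [NormedAddCommGroup E] [NormedSpace ℝ E]
    {A : ℝ → E →L[ℝ] E} {z : ℝ → E} {s : Set ℝ} [s.OrdConnected] (hA : ContinuousOn A s)
    (hz : ∀ t ∈ s, HasDerivAt z (A t (z t)) t) {t₀ : ℝ} (ht₀ : t₀ ∈ s) (hzt₀ : z t₀ = 0) :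
    EqOn z 0 s := by
  have hlip {a b : ℝ} (hab : Icc a b ⊆ s) : ∃ K, ∀ t ∈ Icc a b, LipschitzOnWith K (A t) univ := by
    obtain ⟨C, hC⟩ := isCompact_Icc.exists_bound_of_continuousOn (hA.mono hab)
    exact ⟨C.toNNReal, fun t ht =>
      ((A t).lipschitz.weaken (NNReal.le_toNNReal_of_coe_le (hC t ht))).lipschitzOnWith⟩
  have hzero (t : ℝ) : HasDerivAt (0 : ℝ → E) (A t ((0 : ℝ → E) t)) t := by
    simp [hasDerivAt_zero]
  intro t ht
  rcases le_total t t₀ with htt₀ | htt₀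
  · have hsub : Icc t t₀ ⊆ s := OrdConnected.out ‹_› ht ht₀
    obtain ⟨K, hK⟩ := hlip hsub
    exact ODE_solution_unique_of_mem_Icc_left (v := fun t => A t)
      (fun τ hτ => hK τ (Ioc_subset_Icc_self hτ))
      (HasDerivAt.continuousOn fun τ hτ => hz τ (hsub hτ))
      (fun τ hτ => (hz τ (hsub (Ioc_subset_Icc_self hτ))).hasDerivWithinAt)
      (fun _ _ => mem_univ _) continuousOn_const (fun τ _ => (hzero τ).hasDerivWithinAt)
      (fun _ _ => mem_univ _) hzt₀ (left_mem_Icc.2 htt₀)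
  · have hsub : Icc t₀ t ⊆ s := OrdConnected.out ‹_› ht₀ ht
    obtain ⟨K, hK⟩ := hlip hsub
    exact ODE_solution_unique_of_mem_Icc_right (v := fun t => A t)
      (fun τ hτ => hK τ (Ico_subset_Icc_self hτ))
      (HasDerivAt.continuousOn fun τ hτ => hz τ (hsub hτ))
      (fun τ hτ => (hz τ (hsub (Ico_subset_Icc_self hτ))).hasDerivWithinAt)
      (fun _ _ => mem_univ _) continuousOn_const (fun τ _ => (hzero τ).hasDerivWithinAt)
      (fun _ _ => mem_univ _) hzt₀ (right_mem_Icc.2 htt₀)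

end LinearODE

/-- `y` is a `C²` solution on the positive half-line of `y'' + y' / t = c(t) y`, the equation
`Δy = c y` for radial functions on the plane. Since `y` is `C²` on all of `ℝ`, it is regular at the
singular point `t = 0`. -/
structure IsRadialSolution (c y : ℝ → ℝ) : Prop where
  contDiff : ContDiff ℝ 2 y
  deriv_deriv : ∀ t, 0 < t → deriv (deriv y) t = c t * y t - t⁻¹ * deriv y t

namespace IsRadialSolution

open Set Filter Topology

variable {c u v y : ℝ → ℝ}

lemma hasDerivAt (hy : IsRadialSolution c y) (t : ℝ) : HasDerivAt y (deriv y t) t :=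
  (hy.contDiff.differentiable two_ne_zero t).hasDerivAt

lemma hasDerivAt_deriv (hy : IsRadialSolution c y) (t : ℝ) :
    HasDerivAt (deriv y) (deriv (deriv y) t) t :=
  (hy.contDiff.differentiable_deriv_two t).hasDerivAt

lemma deriv_sub_const_mul (hu : IsRadialSolution c u) (hv : IsRadialSolution c v) (a : ℝ) :
    (deriv fun t => v t - a * u t) = fun t => deriv v t - a * deriv u t :=
  funext fun t => ((hv.hasDerivAt t).sub ((hu.hasDerivAt t).const_mul a)).deriv

lemma sub_const_mul (hu : IsRadialSolution c u) (hv : IsRadialSolution c v) (a : ℝ) :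
    IsRadialSolution c fun t => v t - a * u t where
  contDiff := hv.contDiff.sub (contDiff_const.mul hu.contDiff)
  deriv_deriv t ht := by
    have hsecond : deriv (fun t => deriv v t - a * deriv u t) t =
        deriv (deriv v) t - a * deriv (deriv u) t :=
      ((hv.hasDerivAt_deriv t).sub ((hu.hasDerivAt_deriv t).const_mul a)).deriv
    rw [deriv_sub_const_mul hu hv, hsecond, hu.deriv_deriv t ht, hv.deriv_deriv t ht]
    ring

lemma eqOn_zero_of_cauchyData (hy : IsRadialSolution c y) (hc : ContinuousOn c (Ioi 0)) {R : ℝ}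
    (hR : 0 < R) (hyR : y R = 0) (hyR' : deriv y R = 0) : EqOn y 0 (Ioi 0) := by
  let A : ℝ → ℝ × ℝ →L[ℝ] ℝ × ℝ := fun t => (ContinuousLinearMap.snd ℝ ℝ ℝ).prod
    (c t • ContinuousLinearMap.fst ℝ ℝ ℝ - t⁻¹ • ContinuousLinearMap.snd ℝ ℝ ℝ)
  have hA : ContinuousOn A (Ioi 0) := by
    have hinv : ContinuousOn (fun t : ℝ => t⁻¹) (Ioi 0) :=
      continuousOn_inv₀.mono fun t ht => ne_of_gt ht
    exact (ContinuousLinearMap.prodₗᵢ ℝ).continuous.comp_continuousOn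
      (continuousOn_const.prodMk (by fun_prop))
  have hsystem : ∀ t ∈ Ioi (0 : ℝ),
      HasDerivAt (fun t => (y t, deriv y t)) (A t (y t, deriv y t)) t := fun t ht =>
    ((hy.hasDerivAt t).prodMk (hy.hasDerivAt_deriv t)).congr_deriv
      (congrArg (Prod.mk _) (hy.deriv_deriv t ht))
  have hzero := eqOn_zero_of_hasDerivAt_clm hA hsystem hR (Prod.ext hyR hyR')
  exact fun t ht => congrArg Prod.fst (hzero ht)

lemma wronskian_eq_zero (hu : IsRadialSolution c u) (hv : IsRadialSolution c v) {T : ℝ}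
    (hT : 0 < T) : u T * deriv v T - v T * deriv u T = 0 := by
  let W : ℝ → ℝ := fun t => t * (u t * deriv v t - v t * deriv u t)
  have hWderiv (t : ℝ) : HasDerivAt W (1 * (u t * deriv v t - v t * deriv u t) +
      t * (deriv u t * deriv v t + u t * deriv (deriv v) t -
        (deriv v t * deriv u t + v t * deriv (deriv u) t))) t :=
    (hasDerivAt_id t).mul (((hu.hasDerivAt t).mul (hv.hasDerivAt_deriv t)).sub
      ((hv.hasDerivAt t).mul (hu.hasDerivAt_deriv t)))
  have hWderiv_zero : ∀ t ∈ Ioo 0 T, deriv W t = 0 := fun t ht => by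
    have ht0 : t ≠ 0 := ht.1.ne'
    rw [(hWderiv t).deriv, hu.deriv_deriv t ht.1, hv.deriv_deriv t ht.1]
    field_simp
    ring
  obtain ⟨t, ht, hslope⟩ := exists_deriv_eq_slope W hT
    (HasDerivAt.continuousOn fun t _ => hWderiv t)
    fun t _ => (hWderiv t).differentiableAt.differentiableWithinAt
  have hWT : T * (u T * deriv v T - v T * deriv u T) = 0 := by
    have hW0 : W 0 = 0 := zero_mul _
    rw [hWderiv_zero t ht, hW0, eq_comm, div_eq_zero_iff, sub_zero, sub_zero] at hslope
    exact hslope.resolve_right hT.ne'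
  exact (mul_eq_zero.1 hWT).resolve_left hT.ne'

lemma eqOn_const_mul (hu : IsRadialSolution c u) (hv : IsRadialSolution c v)
    (hc : ContinuousOn c (Ioi 0)) {R : ℝ} (hR : 0 < R) (huR : u R ≠ 0) :
    EqOn v (fun t => v R / u R * u t) (Ioi 0) := by
  have hvalue : v R - v R / u R * u R = 0 := by rw [div_mul_cancel₀ _ huR, sub_self]
  have hslope : deriv (fun t => v t - v R / u R * u t) R = 0 := by
    rw [deriv_sub_const_mul hu hv]
    field_simp
    linear_combination wronskian_eq_zero hu hv hR
  exact fun t ht => sub_eq_zero.1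
    ((hu.sub_const_mul hv (v R / u R)).eqOn_zero_of_cauchyData hc hR hvalue hslope ht)

lemma eqOn_zero_of_tendsto (hu : IsRadialSolution c u) (hv : IsRadialSolution c v)
    (hc : ContinuousOn c (Ioi 0)) {l : ℝ} (hl : l ≠ 0) (hulim : Tendsto u atTop (𝓝 l))
    (hvlim : Tendsto v atTop (𝓝 0)) : EqOn v 0 (Ioi 0) := by
  obtain ⟨R, huR, hR⟩ := ((hulim.eventually_ne hl).and (eventually_gt_atTop 0)).exists
  have hprop := hu.eqOn_const_mul hv hc hR huR
  have hfactor : v R / u R * l = 0 := tendsto_nhds_unique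
    ((hulim.const_mul _).congr' ((eventually_gt_atTop 0).mono fun t ht => (hprop ht).symm)) hvlim
  intro t ht
  simp only [hprop ht, (mul_eq_zero.1 hfactor).resolve_right hl, zero_mul, Pi.zero_apply]

lemma of_fourierMode {f : ℝ × ℝ → ℝ} {μ b : ℝ → ℝ} {κ : ℝ} (hf : ContDiff ℝ 2 f)
    (hlap : ∀ t, 0 < t → lap f (t, 0) = μ t * f (t, 0))
    (hcircle : ∀ t φ, 0 < t →
      f (t * cos φ, t * sin φ) = f (t, 0) * cos (κ * φ) + b t * sin (κ * φ)) :
    IsRadialSolution (fun t => μ t + κ ^ 2 / t ^ 2) fun t => f (t, 0) where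
  contDiff := hf.comp (contDiff_id.prodMk contDiff_const)
  deriv_deriv t ht := by
    have hangular : deriv (deriv fun φ => f (t * cos φ, t * sin φ)) 0 = -(κ ^ 2 * f (t, 0)) := by
      simp only [hcircle t _ ht, deriv_fourierMode, mul_zero, cos_zero, sin_zero]
      ring
    have hpolar := lap_polar hf ht.ne' 0
    rw [hangular] at hpolar
    simp only [cos_zero, sin_zero, mul_one, mul_zero] at hpolar
    rw [hlap t ht] at hpolar
    linear_combination -hpolar

end IsRadialSolution

lemma E0_eq_diagonal : E0 = √(3 / 2) • diagonal ![-1 / 3, -1 / 3, 2 / 3] := by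
  ext i j
  fin_cases i <;> fin_cases j <;> norm_num [E0, e3, vecMulVec, one_apply]

lemma E1_eq (k : ℤ) (φ : ℝ) :
    E1 k φ = (√2)⁻¹ • !![cos (k * φ), sin (k * φ), 0; sin (k * φ), -cos (k * φ), 0; 0, 0, 0] := by
  have hscale : √2 = (√2)⁻¹ * 2 := by rw [← div_eq_inv_mul, div_sqrt]
  have hangle : (k : ℝ) * φ = 2 * (k * φ / 2) := by ring
  rw [E1, congrArg (· • _) hscale, mul_smul, hangle, cos_two_mul, sin_two_mul, nvec]
  generalize (k : ℝ) * φ / 2 = α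
  refine congrArg _ (ext fun i j => ?_)
  fin_cases i <;> fin_cases j <;> simp [I2, e3, vecMulVec, one_apply] <;>
    grind [sin_sq_add_cos_sq α]

lemma E2mat_eq (k : ℤ) (φ : ℝ) :
    E2mat k φ =
      (√2)⁻¹ • !![-sin (k * φ), cos (k * φ), 0; cos (k * φ), sin (k * φ), 0; 0, 0, 0] := by
  have hangle : (k : ℝ) * φ = 2 * (k * φ / 2) := by ring
  rw [E2mat, hangle, cos_two_mul', sin_two_mul, nvec, mvec]
  congr 1
  ext i j
  fin_cases i <;> fin_cases j <;> simp [vecMulVec] <;> ring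

/-- `Q` is `k`-radially symmetric with profiles `w₀`, `w₁`, `w₂`: away from the origin these are its
components, as functions of the radius, in the rotating frame `E₀`, `E₁(φ)`, `E₂(φ)`. -/
def IsRadiallySymmetric (k : ℤ) (w₀ w₁ w₂ : ℝ → ℝ) (Q : ℝ × ℝ → Mat3) : Prop :=
  ∀ r φ : ℝ, 0 < r → Q (r * cos φ, r * sin φ) = w₀ r • E0 + w₁ r • E1 k φ + w₂ r • E2mat k φ

namespace IsRadiallySymmetric

variable {k : ℤ} {w₀ w₁ w₂ : ℝ → ℝ} {Q : ℝ × ℝ → Mat3} {r : ℝ}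

lemma zero_zero_sub_one_one (hQ : IsRadiallySymmetric k w₀ w₁ w₂ Q) (hr : 0 < r) (φ : ℝ) :
    Q (r * cos φ, r * sin φ) 0 0 - Q (r * cos φ, r * sin φ) 1 1 =
      √2 * w₁ r * cos (k * φ) + -(√2 * w₂ r) * sin (k * φ) := by
  simp only [hQ r φ hr, E0_eq_diagonal, E1_eq, E2mat_eq, Matrix.add_apply, Matrix.smul_apply,
    smul_eq_mul, diagonal_apply_eq, of_apply, cons_val]
  linear_combination (w₁ r * cos (k * φ) - w₂ r * sin (k * φ)) * div_sqrt (x := 2)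

lemma zero_one (hQ : IsRadiallySymmetric k w₀ w₁ w₂ Q) (hr : 0 < r) (φ : ℝ) :
    Q (r * cos φ, r * sin φ) 0 1 = w₂ r / √2 * cos (k * φ) + w₁ r / √2 * sin (k * φ) := by
  simp only [hQ r φ hr, E0_eq_diagonal, E1_eq, E2mat_eq, Matrix.add_apply, Matrix.smul_apply,
    smul_eq_mul, diagonal_apply_ne _ zero_ne_one, of_apply, cons_val]
  ring

lemma axis_zero_zero_sub_one_one (hQ : IsRadiallySymmetric k w₀ w₁ w₂ Q) (hr : 0 < r) :
    Q (r, 0) 0 0 - Q (r, 0) 1 1 = √2 * w₁ r := by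
  simpa using hQ.zero_zero_sub_one_one hr 0

lemma axis_zero_one (hQ : IsRadiallySymmetric k w₀ w₁ w₂ Q) (hr : 0 < r) :
    Q (r, 0) 0 1 = w₂ r / √2 := by
  simpa using hQ.zero_one hr 0

lemma axis_zero_two (hQ : IsRadiallySymmetric k w₀ w₁ w₂ Q) (hr : 0 < r) : Q (r, 0) 0 2 = 0 := by
  simpa [E0_eq_diagonal, E1_eq, E2mat_eq] using congrFun₂ (hQ r 0 hr) 0 2

lemma axis_one_two (hQ : IsRadiallySymmetric k w₀ w₁ w₂ Q) (hr : 0 < r) : Q (r, 0) 1 2 = 0 := by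
  simpa [E0_eq_diagonal, E1_eq, E2mat_eq] using congrFun₂ (hQ r 0 hr) 1 2

end IsRadiallySymmetric

/-- The scalar by which the right-hand side of the Euler–Lagrange equation acts on the traceless
part of the in-plane block of a tensor `A` with `A₀₂ = A₁₂ = 0`. By Cayley–Hamilton, the traceless
part of the square of a 2×2 block is the trace of the block times its traceless part. -/
noncomputable def inPlaneFactor (a2 b2 c2 : ℝ) (A : Mat3) : ℝ :=
  -a2 - b2 * (A 0 0 + A 1 1) + c2 * (A * A).trace

section EulerLagrange

variable (a2 b2 c2 : ℝ) {A : Mat3}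

lemma ELrhs_apply_zero_zero_sub_one_one (h02 : A 0 2 = 0) (h12 : A 1 2 = 0) :
    ELrhs a2 b2 c2 A 0 0 - ELrhs a2 b2 c2 A 1 1 =
      inPlaneFactor a2 b2 c2 A * (A 0 0 - A 1 1) := by
  have hsq : (A * A) 0 0 - (A * A) 1 1 = (A 0 0 + A 1 1) * (A 0 0 - A 1 1) := by
    simp only [mul_apply, Fin.sum_univ_three, h02, h12]
    ring
  simp only [ELrhs, inPlaneFactor, Matrix.add_apply, Matrix.sub_apply, Matrix.smul_apply,
    smul_eq_mul, one_apply_eq]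
  linear_combination -b2 * hsq

lemma ELrhs_apply_zero_one (h02 : A 0 2 = 0) :
    ELrhs a2 b2 c2 A 0 1 = inPlaneFactor a2 b2 c2 A * A 0 1 := by
  have hsq : (A * A) 0 1 = (A 0 0 + A 1 1) * A 0 1 := by
    simp only [mul_apply, Fin.sum_univ_three, h02]
    ring
  simp only [ELrhs, inPlaneFactor, Matrix.add_apply, Matrix.sub_apply, Matrix.smul_apply,
    smul_eq_mul, one_apply_ne zero_ne_one]
  linear_combination -b2 * hsq

variable {a2 b2 c2} {k : ℤ} {w₀ w₁ w₂ : ℝ → ℝ} {Q : ℝ × ℝ → Mat3}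

lemma lap_entry_eq_ELrhs (hEL : ∀ x, matLap Q x = ELrhs a2 b2 c2 (Q x)) (x : ℝ × ℝ) (i j : Fin 3) :
    lap (fun x => Q x i j) x = ELrhs a2 b2 c2 (Q x) i j :=
  congrFun₂ (hEL x) i j

lemma IsRadiallySymmetric.isRadialSolution_zero_zero_sub_one_one
    (hQ : IsRadiallySymmetric k w₀ w₁ w₂ Q) (h00 : ContDiff ℝ 2 fun x => Q x 0 0)
    (h11 : ContDiff ℝ 2 fun x => Q x 1 1) (hEL : ∀ x, matLap Q x = ELrhs a2 b2 c2 (Q x)) :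
    IsRadialSolution (fun t => inPlaneFactor a2 b2 c2 (Q (t, 0)) + k ^ 2 / t ^ 2)
      fun t => Q (t, 0) 0 0 - Q (t, 0) 1 1 :=
  .of_fourierMode (f := fun x => Q x 0 0 - Q x 1 1) (b := fun t => -(√2 * w₂ t)) (h00.sub h11)
    (fun t ht => by
      rw [lap_sub h00 h11, lap_entry_eq_ELrhs hEL, lap_entry_eq_ELrhs hEL,
        ELrhs_apply_zero_zero_sub_one_one a2 b2 c2 (hQ.axis_zero_two ht) (hQ.axis_one_two ht)])
    fun t φ ht => by rw [hQ.axis_zero_zero_sub_one_one ht, hQ.zero_zero_sub_one_one ht]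

lemma IsRadiallySymmetric.isRadialSolution_zero_one
    (hQ : IsRadiallySymmetric k w₀ w₁ w₂ Q) (h01 : ContDiff ℝ 2 fun x => Q x 0 1)
    (hEL : ∀ x, matLap Q x = ELrhs a2 b2 c2 (Q x)) :
    IsRadialSolution (fun t => inPlaneFactor a2 b2 c2 (Q (t, 0)) + k ^ 2 / t ^ 2)
      fun t => Q (t, 0) 0 1 :=
  .of_fourierMode (f := fun x => Q x 0 1) (b := fun t => w₁ t / √2) h01
    (fun t ht => by
      rw [lap_entry_eq_ELrhs hEL, ELrhs_apply_zero_one a2 b2 c2 (hQ.axis_zero_two ht)])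
    fun t φ ht => by rw [hQ.axis_zero_one ht, hQ.zero_one ht]

lemma continuous_inPlaneFactor_comp {X : Type*} [TopologicalSpace X] {B : X → Mat3}
    (hB : Continuous B) : Continuous fun x => inPlaneFactor a2 b2 c2 (B x) := by
  unfold inPlaneFactor
  fun_prop

end EulerLagrange

section Decay

open Filter Topology

theorem stmt15_general (a2 b2 c2 : ℝ) (k : ℤ) {l : ℝ} (hl : l ≠ 0) {w₀ w₁ w₂ : ℝ → ℝ}
    {Q : ℝ × ℝ → Mat3} (hQreg : ∀ i j, ContDiff ℝ 2 (fun x => Q x i j))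
    (hQ : IsRadiallySymmetric k w₀ w₁ w₂ Q) (hEL : ∀ x, matLap Q x = ELrhs a2 b2 c2 (Q x))
    (hw₁lim : Tendsto w₁ atTop (𝓝 l)) (hw₂lim : Tendsto w₂ atTop (𝓝 0)) :
    (∀ r : ℝ, 0 < r → w₂ r = 0) ∧
    (∀ r φ : ℝ, 0 < r → Q (r * cos φ, r * sin φ) = w₀ r • E0 + w₁ r • E1 k φ) := by
  have hQcont : Continuous Q := continuous_matrix fun i j => (hQreg i j).continuous
  have hcoeff : ContinuousOn (fun t : ℝ => inPlaneFactor a2 b2 c2 (Q (t, 0)) + k ^ 2 / t ^ 2)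
      (Set.Ioi 0) :=
    (continuous_inPlaneFactor_comp (hQcont.comp (by fun_prop))).continuousOn.add
      (continuousOn_const.div (by fun_prop) fun t ht => pow_ne_zero 2 (ne_of_gt ht))
  have hulim : Tendsto (fun t => Q (t, 0) 0 0 - Q (t, 0) 1 1) atTop (𝓝 (√2 * l)) :=
    (hw₁lim.const_mul √2).congr' <| (eventually_gt_atTop 0).mono fun t ht =>
      (hQ.axis_zero_zero_sub_one_one ht).symm
  have hvlim : Tendsto (fun t => Q (t, 0) 0 1) atTop (𝓝 0) := by
    simpa using (hw₂lim.div_const √2).congr' <| (eventually_gt_atTop 0).mono fun t ht =>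
      (hQ.axis_zero_one ht).symm
  have hu := hQ.isRadialSolution_zero_zero_sub_one_one (hQreg 0 0) (hQreg 1 1) hEL
  have hv := hQ.isRadialSolution_zero_one (hQreg 0 1) hEL
  have hvzero := hu.eqOn_zero_of_tendsto hv hcoeff (by positivity) hulim hvlim
  have hw₂ : ∀ r, 0 < r → w₂ r = 0 := fun r hr => by
    simpa [hQ.axis_zero_one hr] using hvzero hr
  exact ⟨hw₂, fun r φ hr => by rw [hQ r φ hr, hw₂ r hr, zero_smul, add_zero]⟩

end Decay

/-- for a `k`-radially symmetric `C²` solution of the Euler–Lagrange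
equation on all of `ℝ²` with `w₁(∞) = s₊/√2` and `w₂(∞) = 0`, one has `w₂ ≡ 0`, i.e.
`Q = w₀(r)E₀ + w₁(r)E₁(φ)`. -/
theorem stmt15 (a2 b2 c2 : ℝ) (ha : 0 < a2) (hb : 0 < b2) (hc : 0 < c2)
    (k : ℤ) (hk : k ≠ 0)
    (w₀ w₁ w₂ : ℝ → ℝ)
    (hw₀ : ContDiffOn ℝ 2 w₀ (Set.Ioi 0))
    (hw₁ : ContDiffOn ℝ 2 w₁ (Set.Ioi 0))
    (hw₂ : ContDiffOn ℝ 2 w₂ (Set.Ioi 0))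
    (Q : ℝ × ℝ → Mat3)
    (hQreg : ∀ i j, ContDiff ℝ 2 (fun x => Q x i j))
    (hQ : ∀ r φ : ℝ, 0 < r →
      Q (r * Real.cos φ, r * Real.sin φ) = w₀ r • E0 + w₁ r • E1 k φ + w₂ r • E2mat k φ)
    (hEL : ∀ x, matLap Q x = ELrhs a2 b2 c2 (Q x))
    (hw₁lim : Filter.Tendsto w₁ Filter.atTop (nhds (splus a2 b2 c2 / Real.sqrt 2)))
    (hw₂lim : Filter.Tendsto w₂ Filter.atTop (nhds 0)) :
    (∀ r : ℝ, 0 < r → w₂ r = 0) ∧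
    (∀ r φ : ℝ, 0 < r →
      Q (r * Real.cos φ, r * Real.sin φ) = w₀ r • E0 + w₁ r • E1 k φ) :=
  stmt15_general a2 b2 c2 k (by unfold splus; positivity) hQreg hQ hEL hw₁lim hw₂lim
end

section
/- Let a²,b²,c² > 0 and k ∈ ℤ∖{0}. There exists a smooth map Q : ℝ² → S₀ of the form Q(x) = u(|x|)·√2(n(x)⊗n(x) − (1/2)I₂) + v(|x|)·√(3/2)(e₃⊗e₃ − (1/3)I₃), with u ∈ C²([0,∞)) ∩ C^∞((0,∞)), v ∈ C^∞([0,∞)), u > 0 and v < 0 on (0,∞), such that Q satisfies the Euler–Lagrange equation ΔQ = −a²Q − b²(Q² − (1/3)|Q|²I₃) + c²|Q|²Q on all of ℝ² (Laplacian acting componentwise), and such that |Q(x) − s₊(n(x)⊗n(x) − (1/3)I₃)| → 0 as |x| → ∞. -/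
open Real Matrix
open scoped ENNReal

/-!
Write `s = s₊`, `κ = |k|`, `u = s / √2 * r ^ κ * A(r²)` and
`v = -(s / 2) / √(3 / 2) * (1 - η + η * q(r²))`, where `η = b² / (c² s) - 1` lies in `(-1, 1)`
because `2 c² s² = b² s + 3 a²`. In the variable `z = r²` the Euler–Lagrange equation becomes a
system of two equations `z w'' + (κᵢ + 1) w' = N(z, w)` for `w = (A, q)`, with `κᵢ = κ, 0`.
Subtracting each equation from the multiple `(a² z + a (κᵢ + 1)) w` of the unknown, with `a` large,
makes the right-hand side increasing in `w`, because the system is cooperative, and makes the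
left-hand side factor as `(z∂ + κᵢ + 1 + a z)(a - ∂)`, a product of first-order operators with
explicit positive inverses. Monotone iteration between an ordered pair of explicit barriers then
gives a solution. The averages `∫₀¹ σ ^ κ g(t σ) dσ` occurring in the inverses preserve smoothness
at `t = 0`, so a bootstrap shows that `A` and `q` are smooth up to `z = 0`. The barriers force
`z ^ κ * A² → 1` and `q → 1` at infinity, at rate `O(1 / z)`.
-/

noncomputable section

open MeasureTheory Set Filter Topology

/-! ### Power means -/

/-- The weighted average `∫₀¹ σ^κ g(tσ) dσ`: for `t > 0` it is the solution of
`t y' + (κ + 1) y = g` that stays bounded at `t = 0`, and unlike `t^(-κ-1) ∫₀ᵗ s^κ g(s) ds` it is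
visibly as smooth as `g` there. -/
def powerMean (κ : ℕ) (g : ℝ → ℝ) (t : ℝ) : ℝ :=
  ∫ σ in (0 : ℝ)..1, σ ^ κ * g (t * σ)

section PowerMean

variable {κ : ℕ} {f g : ℝ → ℝ}

lemma powerMean_congr (h : EqOn f g (Ioi 0)) {t : ℝ} (ht : 0 < t) :
    powerMean κ f t = powerMean κ g t := by
  refine intervalIntegral.integral_congr_ae (Eventually.of_forall fun σ hσ => ?_)
  rw [uIoc_of_le zero_le_one] at hσ
  rw [h (mul_pos ht hσ.1)]

lemma continuous_powerMean (hg : Continuous g) : Continuous (powerMean κ g) :=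
  intervalIntegral.continuous_parametric_intervalIntegral_of_continuous'
    (f := fun t σ => σ ^ κ * g (t * σ)) (by fun_prop) 0 1

lemma hasDerivAt_powerMean (hg : ContDiff ℝ 1 g) (t : ℝ) :
    HasDerivAt (powerMean κ g) (powerMean (κ + 1) (deriv g) t) t := by
  have hgc : Continuous g := hg.continuous
  have hgc' : Continuous (deriv g) := hg.continuous_deriv_one
  obtain ⟨C, hC⟩ := (isCompact_Icc (a := -(|t| + 1)) (b := |t| + 1)).exists_bound_of_continuousOn
    hgc'.continuousOn
  refine (intervalIntegral.hasDerivAt_integral_of_dominated_loc_of_deriv_le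
    (F := fun t σ => σ ^ κ * g (t * σ)) (F' := fun t σ => σ ^ (κ + 1) * deriv g (t * σ))
    (bound := fun _ => C) (Metric.ball_mem_nhds t one_pos) ?_ ?_ ?_ ?_ ?_ ?_).2
  · exact Eventually.of_forall fun x => (by fun_prop : Continuous _).aestronglyMeasurable
  · exact (by fun_prop : Continuous _).intervalIntegrable _ _
  · exact (by fun_prop : Continuous _).aestronglyMeasurable
  · refine Eventually.of_forall fun σ hσ x hx => ?_
    rw [uIoc_of_le zero_le_one] at hσ
    have hxt : |x| ≤ |t| + 1 := by
      rw [Metric.mem_ball, Real.dist_eq] at hx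
      linarith [abs_sub_abs_le_abs_sub x t]
    have hxσ : |x * σ| ≤ |t| + 1 := by
      rw [abs_mul, abs_of_pos hσ.1]
      exact (mul_le_of_le_one_right (abs_nonneg x) hσ.2).trans hxt
    rw [norm_mul, norm_pow, Real.norm_of_nonneg hσ.1.le]
    exact (mul_le_of_le_one_left (norm_nonneg _) (pow_le_one₀ hσ.1.le hσ.2)).trans
      (hC _ (abs_le.1 hxσ))
  · exact intervalIntegrable_const
  · refine Eventually.of_forall fun σ _ x _ => ?_
    have hgx := ((hg.differentiable one_ne_zero (x * σ)).hasDerivAt.comp x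
      (hasDerivAt_mul_const σ)).const_mul (σ ^ κ)
    exact hgx.congr_deriv (by ring)

lemma contDiff_powerMean {n : ℕ} (hg : ContDiff ℝ n g) : ContDiff ℝ n (powerMean κ g) := by
  induction n generalizing κ g with
  | zero => exact contDiff_zero.2 (continuous_powerMean (contDiff_zero.1 hg))
  | succ n ih =>
    push_cast at hg ⊢
    have hderiv := hasDerivAt_powerMean (κ := κ) (hg.of_le (self_le_add_left _ _))
    refine contDiff_succ_iff_deriv.2 ⟨fun x => (hderiv x).differentiableAt, by simp, ?_⟩
    rw [funext fun x => (hderiv x).deriv]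
    exact ih (contDiff_succ_iff_deriv.1 hg).2.2

lemma mul_deriv_powerMean_add (hg : ContDiff ℝ 1 g) (t : ℝ) :
    t * deriv (powerMean κ g) t + (κ + 1) * powerMean κ g t = g t := by
  have hgc : Continuous g := hg.continuous
  have := hg.continuous_deriv_one
  have hderiv (σ : ℝ) : HasDerivAt (fun σ => σ ^ (κ + 1) * g (t * σ))
      (t * (σ ^ (κ + 1) * deriv g (t * σ)) + (κ + 1) * (σ ^ κ * g (t * σ))) σ := by
    have hgσ := (hg.differentiable one_ne_zero (t * σ)).hasDerivAt.comp σ (hasDerivAt_const_mul t)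
    refine ((hasDerivAt_pow (κ + 1) σ).fun_mul hgσ).congr_deriv ?_
    simp only [Nat.add_sub_cancel, Function.comp_apply]
    push_cast
    ring
  have hFTC := intervalIntegral.integral_eq_sub_of_hasDerivAt (a := 0) (b := 1)
    (fun σ _ => hderiv σ) ((by fun_prop : Continuous _).intervalIntegrable _ _)
  rw [intervalIntegral.integral_add ((by fun_prop : Continuous _).intervalIntegrable _ _)
    ((by fun_prop : Continuous _).intervalIntegrable _ _), intervalIntegral.integral_const_mul,
    intervalIntegral.integral_const_mul] at hFTC
  rw [(hasDerivAt_powerMean hg t).deriv]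
  simpa [powerMean] using hFTC

end PowerMean

/-! ### The Green operator -/

/-- Measurable functions of at most linear growth on the half-line: the domain on which the Green
operator is defined. -/
structure IsLinearlyBounded (C : ℝ) (f : ℝ → ℝ) : Prop where
  measurable : Measurable f
  abs_le : ∀ x, 0 < x → |f x| ≤ C * (1 + x)

/-- The operator `z∂² + (κ + 1)∂`. If `h` is a harmonic polynomial on the plane, homogeneous of
degree `κ`, then `Δ(S(|x|²) h(x)) = 4 (radialOp κ S)(|x|²) h(x)`. -/
def radialOp (κ : ℕ) (S : ℝ → ℝ) (z : ℝ) : ℝ :=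
  z * deriv (deriv S) z + (κ + 1) * deriv S z

/-- The inverse of the first-order operator `t∂ + κ + 1 + at` on the half-line. -/
def expMean (κ : ℕ) (a : ℝ) (f : ℝ → ℝ) (t : ℝ) : ℝ :=
  rexp (-a * t) * powerMean κ (fun s => rexp (a * s) * f s) t

/-- The inverse of the first-order operator `a - ∂` on functions bounded at infinity. -/
def expTail (a : ℝ) (h : ℝ → ℝ) (z : ℝ) : ℝ :=
  ∫ τ in Ioi (0 : ℝ), rexp (-a * τ) * h (z + τ)

/-- The Green operator of `a²z + a(κ + 1) - radialOp κ = (t∂ + κ + 1 + at) ∘ (a - ∂)` on the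
half-line. -/
def green (κ : ℕ) (a : ℝ) (f : ℝ → ℝ) : ℝ → ℝ :=
  expTail a (expMean κ a f)

section HalfLine

variable {κ : ℕ} {a C : ℝ} {f g h : ℝ → ℝ}

lemma IsLinearlyBounded.nonneg (hf : IsLinearlyBounded C f) : 0 ≤ C := by
  linarith [hf.abs_le 1 one_pos, abs_nonneg (f 1)]

lemma IsLinearlyBounded.neg (hf : IsLinearlyBounded C f) : IsLinearlyBounded C (-f) :=
  ⟨hf.measurable.neg, fun x hx => by simpa using hf.abs_le x hx⟩

section ExpMean

lemma expMean_congr (hfg : EqOn f g (Ioi 0)) : EqOn (expMean κ a f) (expMean κ a g) (Ioi 0) :=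
  fun t ht => by
    unfold expMean
    rw [powerMean_congr (fun x hx => by rw [hfg hx]) ht]

lemma expMean_neg : expMean κ a (-f) = -expMean κ a f := by
  ext t
  simp [expMean, powerMean]

lemma measurable_expMean (hf : Measurable f) : Measurable (expMean κ a f) := by
  have hmeas : StronglyMeasurable (Function.uncurry fun t σ : ℝ =>
      σ ^ κ * (rexp (a * (t * σ)) * f (t * σ))) := by
    refine Measurable.stronglyMeasurable ?_
    unfold Function.uncurry
    fun_prop
  unfold expMean powerMean
  simp only [intervalIntegral.integral_of_le zero_le_one]
  exact Measurable.mul (by fun_prop)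
    (hmeas.integral_prod_right' (ν := volume.restrict (Ioc 0 1))).measurable

lemma IsLinearlyBounded.norm_expMean_integrand_le (hf : IsLinearlyBounded C f) (ha : 0 ≤ a)
    {t σ : ℝ} (ht : 0 < t) (hσ : σ ∈ uIoc (0 : ℝ) 1) :
    ‖σ ^ κ * (rexp (a * (t * σ)) * f (t * σ))‖ ≤ rexp (a * t) * (C * (1 + t)) := by
  rw [uIoc_of_le zero_le_one] at hσ
  have hC := hf.nonneg
  have htσ : t * σ ≤ t := mul_le_of_le_one_right ht.le hσ.2
  rw [norm_mul, norm_mul, norm_pow, Real.norm_of_nonneg hσ.1.le,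
    Real.norm_of_nonneg (exp_pos _).le]
  calc σ ^ κ * (rexp (a * (t * σ)) * ‖f (t * σ)‖)
      ≤ 1 * (rexp (a * t) * (C * (1 + t))) := by
        gcongr
        · exact pow_le_one₀ hσ.1.le hσ.2
        · exact (hf.abs_le _ (mul_pos ht hσ.1)).trans (by gcongr)
    _ = _ := one_mul _

lemma IsLinearlyBounded.intervalIntegrable_expMean (hf : IsLinearlyBounded C f) (ha : 0 ≤ a)
    {t : ℝ} (ht : 0 < t) :
    IntervalIntegrable (fun σ => σ ^ κ * (rexp (a * (t * σ)) * f (t * σ))) volume 0 1 := by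
  have := hf.measurable
  refine (intervalIntegrable_const (c := rexp (a * t) * (C * (1 + t)))).mono_fun'
    (Measurable.aestronglyMeasurable (by fun_prop)) ?_
  filter_upwards [ae_restrict_mem measurableSet_uIoc] with σ hσ
  exact hf.norm_expMean_integrand_le ha ht hσ

lemma isLinearlyBounded_expMean (hf : IsLinearlyBounded C f) (ha : 0 ≤ a) :
    IsLinearlyBounded C (expMean κ a f) := by
  refine ⟨measurable_expMean hf.measurable, fun t ht => ?_⟩
  have hnorm := intervalIntegral.norm_integral_le_of_norm_le_const
    (fun σ hσ => hf.norm_expMean_integrand_le (κ := κ) ha ht hσ)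
  rw [sub_zero, abs_one, mul_one] at hnorm
  rw [expMean, abs_mul, abs_of_pos (exp_pos _)]
  calc _ ≤ rexp (-a * t) * (rexp (a * t) * (C * (1 + t))) := by gcongr; exact hnorm
    _ = _ := by rw [← mul_assoc, ← Real.exp_add]; simp

lemma expMean_mono (hf : IsLinearlyBounded C f) (hg : IsLinearlyBounded C g) (ha : 0 ≤ a)
    (hfg : ∀ x, 0 < x → f x ≤ g x) {t : ℝ} (ht : 0 < t) : expMean κ a f t ≤ expMean κ a g t := by
  unfold expMean powerMean
  gcongr
  refine intervalIntegral.integral_mono_on_of_le_Ioo zero_le_one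
    (hf.intervalIntegrable_expMean ha ht) (hg.intervalIntegrable_expMean ha ht) fun σ hσ => ?_
  have := hσ.1.le
  dsimp only
  gcongr
  exact hfg _ (mul_pos ht hσ.1)

lemma tendsto_expMean {F : ℕ → ℝ → ℝ} (hF : ∀ n, IsLinearlyBounded C (F n)) (ha : 0 ≤ a)
    (hlim : ∀ x, 0 < x → Tendsto (fun n => F n x) atTop (𝓝 (f x))) {t : ℝ} (ht : 0 < t) :
    Tendsto (fun n => expMean κ a (F n) t) atTop (𝓝 (expMean κ a f t)) := by
  refine Tendsto.const_mul _ ?_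
  refine intervalIntegral.tendsto_integral_filter_of_dominated_convergence
    (fun _ => rexp (a * t) * (C * (1 + t))) (Eventually.of_forall fun n => ?_)
    (Eventually.of_forall fun n => Eventually.of_forall fun σ hσ =>
      (hF n).norm_expMean_integrand_le ha ht hσ)
    intervalIntegrable_const (Eventually.of_forall fun σ hσ => ?_)
  · have := (hF n).measurable
    exact Measurable.aestronglyMeasurable (by fun_prop)
  · rw [uIoc_of_le zero_le_one] at hσ
    exact ((hlim _ (mul_pos ht hσ.1)).const_mul _).const_mul _

lemma le_expMean (hf : IsLinearlyBounded C f) (ha : 0 ≤ a) {Y : ℝ → ℝ}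
    (hY : ContinuousOn Y (Ici 0)) (hYd : ∀ s, 0 < s → DifferentiableAt ℝ Y s)
    (hle : ∀ s, 0 < s → s * deriv Y s + (κ + 1 + a * s) * Y s ≤ f s) {t : ℝ} (ht : 0 < t) :
    Y t ≤ expMean κ a f t := by
  set φ : ℝ → ℝ := fun σ => σ ^ (κ + 1) * (rexp (a * (t * σ)) * Y (t * σ)) with hφ
  have hcont : ContinuousOn φ (Icc 0 1) := by
    have : ContinuousOn (fun σ => Y (t * σ)) (Icc 0 1) :=
      hY.comp (by fun_prop) fun σ hσ => mul_nonneg ht.le hσ.1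
    exact ContinuousOn.mul (by fun_prop) (ContinuousOn.mul (by fun_prop) this)
  have hderiv (σ : ℝ) (hσ : σ ∈ Ioo (0 : ℝ) 1) : HasDerivAt φ (σ ^ κ * (rexp (a * (t * σ)) *
      ((t * σ) * deriv Y (t * σ) + (κ + 1 + a * (t * σ)) * Y (t * σ)))) σ := by
    have hYσ := (hYd _ (mul_pos ht hσ.1)).hasDerivAt.comp σ (hasDerivAt_const_mul t)
    refine ((hasDerivAt_pow (κ + 1) σ).fun_mul
      (((hasDerivAt_const_mul t).const_mul a).exp.fun_mul hYσ)).congr_deriv ?_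
    simp only [Nat.add_sub_cancel, Function.comp_apply]
    push_cast
    ring
  have key := intervalIntegral.sub_le_integral_of_hasDeriv_right_of_le zero_le_one hcont
    (fun σ hσ => (hderiv σ hσ).hasDerivWithinAt)
    ((intervalIntegrable_iff_integrableOn_Icc_of_le zero_le_one).1
      (hf.intervalIntegrable_expMean (κ := κ) ha ht)) fun σ hσ => by
        have := hσ.1.le
        gcongr
        exact hle _ (mul_pos ht hσ.1)
  have hφ01 : φ 1 - φ 0 = rexp (a * t) * Y t := by simp [hφ]
  rw [hφ01] at key
  calc Y t = rexp (-a * t) * (rexp (a * t) * Y t) := by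
        rw [← mul_assoc, ← Real.exp_add]
        simp
    _ ≤ _ := by
        unfold expMean
        gcongr
        exact key

end ExpMean

section ExpTail

lemma integrableOn_exp_mul_linear (ha : 0 < a) (z : ℝ) :
    IntegrableOn (fun τ => rexp (-a * τ) * (C * (1 + (z + τ)))) (Ioi 0) := by
  have hexp : IntegrableOn (fun τ : ℝ => rexp (-a * τ)) (Ioi 0) := by
    simpa using integrableOn_exp_mul_Ioi (neg_lt_zero.2 ha) 0
  have hmul : IntegrableOn (fun τ : ℝ => τ * rexp (-a * τ)) (Ioi 0) := by
    simpa using integrableOn_rpow_mul_exp_neg_mul_rpow (p := 1) (s := 1) (by norm_num) one_pos ha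
  refine ((hexp.const_mul (C * (1 + z))).add (hmul.const_mul C)).congr
    (Eventually.of_forall fun τ => ?_)
  simp only [Pi.add_apply]
  ring

lemma expTail_congr (hfg : EqOn f g (Ioi 0)) : EqOn (expTail a f) (expTail a g) (Ici 0) :=
  fun z hz => setIntegral_congr_fun measurableSet_Ioi fun τ hτ => by
    rw [hfg (mem_Ioi.2 (add_pos_of_nonneg_of_pos hz hτ))]

lemma expTail_neg : expTail a (-f) = -expTail a f := by
  ext z
  simp [expTail, integral_neg]

lemma measurable_expTail (hf : Measurable f) : Measurable (expTail a f) := by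
  have hmeas : StronglyMeasurable (Function.uncurry fun z τ : ℝ => rexp (-a * τ) * f (z + τ)) := by
    refine Measurable.stronglyMeasurable ?_
    unfold Function.uncurry
    fun_prop
  exact (hmeas.integral_prod_right' (ν := volume.restrict (Ioi 0))).measurable

lemma IsLinearlyBounded.norm_expTail_integrand_le (hf : IsLinearlyBounded C f) {z τ : ℝ}
    (hz : 0 ≤ z) (hτ : 0 < τ) :
    ‖rexp (-a * τ) * f (z + τ)‖ ≤ rexp (-a * τ) * (C * (1 + (z + τ))) := by
  rw [norm_mul, Real.norm_of_nonneg (exp_pos _).le]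
  gcongr
  exact hf.abs_le _ (by linarith)

lemma IsLinearlyBounded.integrableOn_expTail (hf : IsLinearlyBounded C f) (ha : 0 < a) {z : ℝ}
    (hz : 0 ≤ z) :
    IntegrableOn (fun τ => rexp (-a * τ) * f (z + τ)) (Ioi 0) := by
  have := hf.measurable
  refine (integrableOn_exp_mul_linear (C := C) ha z).mono'
    (Measurable.aestronglyMeasurable (by fun_prop)) ?_
  filter_upwards [ae_restrict_mem measurableSet_Ioi] with τ hτ
  exact hf.norm_expTail_integrand_le hz hτ

lemma expTail_mono (hf : IsLinearlyBounded C f) (hg : IsLinearlyBounded C g) (ha : 0 < a)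
    (hfg : ∀ x, 0 < x → f x ≤ g x) {z : ℝ} (hz : 0 ≤ z) : expTail a f z ≤ expTail a g z := by
  refine setIntegral_mono_on (hf.integrableOn_expTail ha hz) (hg.integrableOn_expTail ha hz)
    measurableSet_Ioi fun τ hτ => ?_
  gcongr
  exact hfg _ (add_pos_of_nonneg_of_pos hz hτ)

lemma tendsto_expTail {F : ℕ → ℝ → ℝ} (hF : ∀ n, IsLinearlyBounded C (F n)) (ha : 0 < a)
    (hlim : ∀ x, 0 < x → Tendsto (fun n => F n x) atTop (𝓝 (f x))) {z : ℝ} (hz : 0 ≤ z) :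
    Tendsto (fun n => expTail a (F n) z) atTop (𝓝 (expTail a f z)) := by
  refine tendsto_integral_of_dominated_convergence
    (fun τ => rexp (-a * τ) * (C * (1 + (z + τ))))
    (fun n => ((hF n).integrableOn_expTail ha hz).aestronglyMeasurable)
    (integrableOn_exp_mul_linear ha z) (fun n => ?_) ?_
  all_goals filter_upwards [ae_restrict_mem measurableSet_Ioi] with τ hτ
  · exact (hF n).norm_expTail_integrand_le hz hτ
  · exact (hlim _ (add_pos_of_nonneg_of_pos hz hτ)).const_mul _

lemma tendsto_exp_mul_atTop_zero {S : ℝ → ℝ} {K : ℝ} (ha : 0 < a)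
    (hK : ∀ z, 0 < z → |S z| ≤ K) :
    Tendsto (fun T => rexp (-a * T) * S T) atTop (𝓝 0) := by
  have hexp : Tendsto (fun T => rexp (-a * T)) atTop (𝓝 0) :=
    Real.tendsto_exp_atBot.comp (tendsto_id.const_mul_atTop_of_neg (neg_lt_zero.2 ha))
  refine squeeze_zero_norm' (a := fun T => rexp (-a * T) * K) ?_ (by simpa using hexp.mul_const K)
  filter_upwards [eventually_gt_atTop 0] with T hT
  rw [norm_mul, Real.norm_of_nonneg (exp_pos _).le]
  exact mul_le_mul_of_nonneg_left (hK T hT) (exp_pos _).le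

lemma le_expTail (hh : IsLinearlyBounded C h) (ha : 0 < a) {S : ℝ → ℝ} {K : ℝ}
    (hSd : ∀ z, 0 < z → DifferentiableAt ℝ S z) (hK : ∀ z, 0 < z → |S z| ≤ K)
    (hle : ∀ z, 0 < z → a * S z - deriv S z ≤ h z) {z : ℝ} (hz : 0 < z) :
    S z ≤ expTail a h z := by
  have hinteg := hh.integrableOn_expTail ha hz.le
  have hderiv (τ : ℝ) (hτ : 0 ≤ τ) : HasDerivAt (fun τ => -(rexp (-a * τ) * S (z + τ)))
      (rexp (-a * τ) * (a * S (z + τ) - deriv S (z + τ))) τ := by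
    have hS := (hSd (z + τ) (add_pos_of_pos_of_nonneg hz hτ)).hasDerivAt.comp_const_add z τ
    refine ((hasDerivAt_const_mul (-a)).exp.fun_mul hS).fun_neg.congr_deriv ?_
    ring
  have hFTC (T : ℝ) (hT : 0 ≤ T) :
      S z - rexp (-a * T) * S (z + T) ≤ ∫ τ in (0 : ℝ)..T, rexp (-a * τ) * h (z + τ) := by
    have key := intervalIntegral.sub_le_integral_of_hasDeriv_right_of_le hT
      (fun τ hτ => (hderiv τ hτ.1).continuousAt.continuousWithinAt)
      (fun τ hτ => (hderiv τ hτ.1.le).hasDerivWithinAt)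
      ((integrableOn_Icc_iff_integrableOn_Ioc).2 (hinteg.mono_set Ioc_subset_Ioi_self))
      fun τ hτ => by
        gcongr
        exact hle _ (add_pos hz hτ.1)
    simp only [mul_zero, Real.exp_zero, add_zero, one_mul] at key
    linarith
  have hlim := tendsto_exp_mul_atTop_zero (S := fun T => S (z + T)) ha
    fun T hT => hK _ (add_pos hz hT)
  have hle' := le_of_tendsto_of_tendsto (hlim.const_sub (S z))
    (intervalIntegral_tendsto_integral_Ioi 0 hinteg tendsto_id)
    (by filter_upwards [eventually_ge_atTop 0] with T hT using hFTC T hT)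
  rwa [sub_zero] at hle'

end ExpTail

section Green

lemma measurable_green (hf : Measurable f) : Measurable (green κ a f) :=
  measurable_expTail (measurable_expMean hf)

lemma green_neg : green κ a (-f) = -green κ a f := by
  rw [green, expMean_neg, expTail_neg, green]

lemma green_mono (hf : IsLinearlyBounded C f) (hg : IsLinearlyBounded C g) (ha : 0 < a)
    (hfg : ∀ x, 0 < x → f x ≤ g x) {z : ℝ} (hz : 0 ≤ z) : green κ a f z ≤ green κ a g z :=
  expTail_mono (isLinearlyBounded_expMean hf ha.le) (isLinearlyBounded_expMean hg ha.le) ha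
    (fun _ => expMean_mono hf hg ha.le hfg) hz

lemma tendsto_green {F : ℕ → ℝ → ℝ} (hF : ∀ n, IsLinearlyBounded C (F n)) (ha : 0 < a)
    (hlim : ∀ x, 0 < x → Tendsto (fun n => F n x) atTop (𝓝 (f x))) {z : ℝ} (hz : 0 ≤ z) :
    Tendsto (fun n => green κ a (F n) z) atTop (𝓝 (green κ a f z)) :=
  tendsto_expTail (fun n => isLinearlyBounded_expMean (hF n) ha.le) ha
    (fun _ => tendsto_expMean hF ha.le hlim) hz

/-- Bounded comparison functions on the half-line, regular enough up to `0` for a differential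
inequality to be integrated against the kernel of `green`. -/
structure IsBarrier (S : ℝ → ℝ) : Prop where
  measurable : Measurable S
  contDiffAt : ∀ z, 0 ≤ z → ContDiffAt ℝ 2 S z
  bounded : ∃ K, ∀ z, 0 ≤ z → |S z| ≤ K

variable {S : ℝ → ℝ}

lemma IsBarrier.contDiffAt_deriv (hS : IsBarrier S) {z : ℝ} (hz : 0 ≤ z) :
    ContDiffAt ℝ 1 (deriv S) z :=
  (hS.contDiffAt z hz).derivWithin (m := 1) (by norm_num)

lemma IsBarrier.neg (hS : IsBarrier S) : IsBarrier (-S) :=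
  ⟨hS.measurable.neg, fun z hz => (hS.contDiffAt z hz).neg, by simpa using hS.bounded⟩

lemma radialOp_neg : radialOp κ (-S) = -radialOp κ S := by
  have hderiv (T : ℝ → ℝ) : deriv (-T) = -deriv T := funext fun _ => deriv.neg
  ext z
  simp only [radialOp, hderiv, Pi.neg_apply]
  ring

lemma le_green (hf : IsLinearlyBounded C f) (ha : 0 < a) (hS : IsBarrier S)
    (hle : ∀ z, 0 < z → (a ^ 2 * z + a * (κ + 1)) * S z - radialOp κ S z ≤ f z)
    {z : ℝ} (hz : 0 < z) : S z ≤ green κ a f z := by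
  obtain ⟨K, hK⟩ := hS.bounded
  have hd (z : ℝ) (hz : 0 ≤ z) : DifferentiableAt ℝ S z :=
    (hS.contDiffAt z hz).differentiableAt (by norm_num)
  have hd' (z : ℝ) (hz : 0 ≤ z) : DifferentiableAt ℝ (deriv S) z :=
    (hS.contDiffAt_deriv hz).differentiableAt one_ne_zero
  have hYd (z : ℝ) (hz : 0 ≤ z) : HasDerivAt (fun s => a * S s - deriv S s)
      (a * deriv S z - deriv (deriv S) z) z :=
    ((hd z hz).hasDerivAt.const_mul a).sub (hd' z hz).hasDerivAt
  refine le_expTail (isLinearlyBounded_expMean hf ha.le) ha (fun z hz => hd z hz.le)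
    (fun z hz => hK z hz.le) (fun t ht => le_expMean hf ha.le
      (fun s hs => (hYd s hs).continuousAt.continuousWithinAt)
      (fun s hs => (hYd s hs.le).differentiableAt) (fun s hs => ?_) ht) hz
  rw [(hYd s hs.le).deriv]
  refine (le_of_eq ?_).trans (hle s hs)
  rw [radialOp]
  ring

lemma green_le (hf : IsLinearlyBounded C f) (ha : 0 < a) (hS : IsBarrier S)
    (hle : ∀ z, 0 < z → f z ≤ (a ^ 2 * z + a * (κ + 1)) * S z - radialOp κ S z)
    {z : ℝ} (hz : 0 < z) : green κ a f z ≤ S z := by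
  have hneg := le_green (κ := κ) hf.neg ha hS.neg (fun x hx => ?_) hz
  · rw [green_neg] at hneg
    exact neg_le_neg_iff.1 hneg
  · simp only [radialOp_neg, Pi.neg_apply]
    linarith [hle x hx]

end Green

/-! ### Regularity up to the origin -/

/-- `f` agrees on `[0, ∞)` with a `Cⁿ` function on the line. -/
def HasContDiffExtension {E : Type*} [NormedAddCommGroup E] [NormedSpace ℝ E] (n : ℕ)
    (f : ℝ → E) : Prop :=
  ∃ g : ℝ → E, ContDiff ℝ n g ∧ EqOn g f (Ici 0)

section Regularity

variable {E E' : Type*} [NormedAddCommGroup E] [NormedSpace ℝ E] [NormedAddCommGroup E']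
  [NormedSpace ℝ E']

namespace HasContDiffExtension

lemma congr {n : ℕ} {f₁ f₂ : ℝ → E} (hf : HasContDiffExtension n f₁) (h : EqOn f₁ f₂ (Ici 0)) :
    HasContDiffExtension n f₂ :=
  let ⟨g, hg, hgf⟩ := hf
  ⟨g, hg, hgf.trans h⟩

lemma pi {ι : Type*} [Fintype ι] {n : ℕ} {w : ℝ → ι → ℝ}
    (hw : ∀ i, HasContDiffExtension n (fun z => w z i)) : HasContDiffExtension n w := by
  choose g hg hgw using hw
  exact ⟨fun z i => g i z, contDiff_pi.2 hg, fun z hz => funext fun i => hgw i hz⟩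

lemma comp {n : ℕ} {w : ℝ → E} {F : ℝ → E → E'} (hF : ContDiff ℝ n (Function.uncurry F))
    (hw : HasContDiffExtension n w) : HasContDiffExtension n (fun z => F z (w z)) :=
  let ⟨g, hg, hgw⟩ := hw
  ⟨fun z => F z (g z), hF.comp (contDiff_id.prodMk hg), fun z hz => by simp only [hgw hz]⟩

lemma contDiff_comp {w : ℝ → E} (hw : ∀ n, HasContDiffExtension n w) {ρ : E' → ℝ}
    (hρ : ContDiff ℝ (⊤ : ℕ∞) ρ) (hρ0 : ∀ x, 0 ≤ ρ x) :
    ContDiff ℝ (⊤ : ℕ∞) (fun x => w (ρ x)) :=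
  contDiff_infty.2 fun n => by
    obtain ⟨g, hg, hgw⟩ := hw n
    have hcomp := hg.comp (hρ.of_le (by exact_mod_cast le_top))
    rwa [show g ∘ ρ = fun x => w (ρ x) from funext fun x => hgw (hρ0 x)] at hcomp

end HasContDiffExtension

lemma expTail_eq_mul_integral_Ioi (z : ℝ) :
    expTail a f z = rexp (a * z) * ∫ t in Ioi z, rexp (-a * t) * f t := by
  have hshift := (measurePreserving_add_left volume z).setIntegral_preimage_emb
    (measurableEmbedding_addLeft z) (fun t => rexp (-a * t) * f t) (Ioi z)
  rw [← hshift, expTail, ← integral_const_mul]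
  simp only [preimage_const_add_Ioi, sub_self]
  refine integral_congr_ae (Eventually.of_forall fun τ => ?_)
  dsimp only
  rw [← mul_assoc, ← Real.exp_add]
  ring_nf

lemma IsLinearlyBounded.integrableOn_Ioi (hf : IsLinearlyBounded C f) (ha : 0 < a) {z : ℝ}
    (hz : 0 ≤ z) : IntegrableOn (fun t => rexp (-a * t) * f t) (Ioi z) := by
  have hinteg := hf.integrableOn_expTail ha le_rfl
  simp only [zero_add] at hinteg
  exact hinteg.mono_set (Ioi_subset_Ioi hz)

/-- The solution of `a y - y' = g` with `y(0) = c`. -/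
def expPrimitive (a c : ℝ) (g : ℝ → ℝ) (z : ℝ) : ℝ :=
  rexp (a * z) * (c - ∫ t in (0 : ℝ)..z, rexp (-a * t) * g t)

lemma hasDerivAt_expPrimitive (hg : Continuous g) (c z : ℝ) :
    HasDerivAt (expPrimitive a c g) (a * expPrimitive a c g z - g z) z := by
  have hc : Continuous fun t => rexp (-a * t) * g t := by fun_prop
  have hinteg := hc.integral_hasStrictDerivAt 0 z
  refine ((hasDerivAt_const_mul a).exp.fun_mul (hinteg.hasDerivAt.const_sub c)).congr_deriv ?_
  have hexp : rexp (a * z) * rexp (-a * z) = 1 := by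
    rw [← Real.exp_add]
    simp
  rw [expPrimitive]
  linear_combination -g z * hexp

lemma contDiff_expPrimitive {n : ℕ} (hg : ContDiff ℝ n g) (c : ℝ) :
    ContDiff ℝ (n + 1) (expPrimitive a c g) := by
  have hd := hasDerivAt_expPrimitive (a := a) hg.continuous c
  have hstep {m : ℕ} (hgm : ContDiff ℝ m g) (hm : ContDiff ℝ m (expPrimitive a c g)) :
      ContDiff ℝ (m + 1) (expPrimitive a c g) := by
    refine contDiff_succ_iff_deriv.2 ⟨fun z => (hd z).differentiableAt, by simp, ?_⟩
    rw [funext fun z => (hd z).deriv]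
    exact (contDiff_const.mul hm).sub hgm
  induction n with
  | zero =>
    exact hstep hg (contDiff_zero.2 (Differentiable.continuous fun z => (hd z).differentiableAt))
  | succ n ih =>
    refine hstep hg ?_
    push_cast
    exact ih (hg.of_le (by norm_cast; lia))

lemma expTail_eq_expPrimitive (hh : IsLinearlyBounded C h) (ha : 0 < a) (hgh : EqOn g h (Ioi 0)) :
    EqOn (expTail a h) (expPrimitive a (expTail a h 0) g) (Ici 0) := fun z hz => by
  have hgh' : ∫ t in (0 : ℝ)..z, rexp (-a * t) * g t = ∫ t in (0 : ℝ)..z, rexp (-a * t) * h t := by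
    refine intervalIntegral.integral_congr_ae (Eventually.of_forall fun t ht => ?_)
    rw [uIoc_of_le hz] at ht
    rw [hgh ht.1]
  rw [expPrimitive, expTail_eq_mul_integral_Ioi, expTail_eq_mul_integral_Ioi, hgh',
    ← intervalIntegral.integral_Ioi_sub_Ioi (hh.integrableOn_Ioi ha le_rfl) hz]
  simp

lemma contDiff_expMean {n : ℕ} (hg : ContDiff ℝ n g) : ContDiff ℝ n (expMean κ a g) :=
  ContDiff.mul (by fun_prop) (contDiff_powerMean (by fun_prop))

lemma mul_deriv_expMean_add (hg : ContDiff ℝ 1 g) (t : ℝ) :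
    t * deriv (expMean κ a g) t + (κ + 1 + a * t) * expMean κ a g t = g t := by
  have hexp : ContDiff ℝ 1 fun s => rexp (a * s) * g s := by fun_prop
  have hd : HasDerivAt (expMean κ a g) _ t := (hasDerivAt_const_mul (-a)).exp.fun_mul
    (hasDerivAt_powerMean hexp t)
  have heuler := mul_deriv_powerMean_add (κ := κ) hexp t
  have hexp1 : rexp (-a * t) * rexp (a * t) = 1 := by
    rw [← Real.exp_add]
    simp
  rw [(hasDerivAt_powerMean hexp t).deriv] at heuler
  rw [hd.deriv, expMean]
  linear_combination rexp (-a * t) * heuler + g t * hexp1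

lemma radialOp_expPrimitive (hg : ContDiff ℝ 1 g) (c z : ℝ) :
    radialOp κ (expPrimitive a c (expMean κ a g)) z =
      (a ^ 2 * z + a * (κ + 1)) * expPrimitive a c (expMean κ a g) z - g z := by
  have hE : ContDiff ℝ 1 (expMean κ a g) := contDiff_expMean hg
  have hd := hasDerivAt_expPrimitive (a := a) hE.continuous c
  have hd2 := ((hd z).const_mul a).fun_sub (hE.differentiable one_ne_zero z).hasDerivAt
  rw [radialOp, funext fun z => (hd z).deriv, hd2.deriv]
  linear_combination -mul_deriv_expMean_add (κ := κ) (a := a) hg z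

lemma green_eq_expPrimitive (hf : IsLinearlyBounded C f) (ha : 0 < a) (hgf : EqOn g f (Ioi 0)) :
    EqOn (green κ a f) (expPrimitive a (green κ a f 0) (expMean κ a g)) (Ici 0) :=
  expTail_eq_expPrimitive (isLinearlyBounded_expMean hf ha.le) ha (expMean_congr hgf)

lemma hasContDiffExtension_zero_green (hf : IsLinearlyBounded C f) (ha : 0 < a) :
    HasContDiffExtension 0 (green κ a f) := by
  have hinteg := (isLinearlyBounded_expMean (κ := κ) hf ha.le).integrableOn_Ioi ha le_rfl
  have hcont : ContinuousOn (green κ a f) (Ici 0) := by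
    rw [green, funext expTail_eq_mul_integral_Ioi]
    exact ContinuousOn.mul (by fun_prop) hinteg.continuousOn_Ici_primitive_Ioi
  refine ⟨fun z => green κ a f (max z 0), ?_, fun z hz => congrArg _ (max_eq_left hz)⟩
  exact contDiff_zero.2 (hcont.comp_continuous (by fun_prop) fun z => le_max_right z 0)

lemma hasContDiffExtension_succ_green (hf : IsLinearlyBounded C f) (ha : 0 < a) {n : ℕ}
    (hfn : HasContDiffExtension n f) : HasContDiffExtension (n + 1) (green κ a f) := by
  obtain ⟨g, hg, hgf⟩ := hfn
  exact ⟨_, by exact_mod_cast contDiff_expPrimitive (contDiff_expMean hg) _,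
    (green_eq_expPrimitive hf ha (hgf.mono Ioi_subset_Ici_self)).symm⟩

lemma exists_contDiff_extension_green (hf : IsLinearlyBounded C f) (ha : 0 < a)
    (hf1 : HasContDiffExtension 1 f) :
    ∃ G, ContDiff ℝ 2 G ∧ EqOn G (green κ a f) (Ici 0) ∧
      ∀ z, 0 ≤ z → radialOp κ G z = (a ^ 2 * z + a * (κ + 1)) * G z - f z := by
  obtain ⟨g, hg, hgf⟩ := hf1
  refine ⟨_, by exact_mod_cast contDiff_expPrimitive (contDiff_expMean hg) _,
    (green_eq_expPrimitive hf ha (hgf.mono Ioi_subset_Ici_self)).symm, fun z hz => ?_⟩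
  rw [radialOp_expPrimitive (by exact_mod_cast hg), hgf hz]

end Regularity

end HalfLine

/-! ### Monotone iteration between barriers -/

section MonotoneIteration

variable {ι : Type*} {a C : ℝ} {κ : ι → ℕ} {N F : ℝ → (ι → ℝ) → ι → ℝ}
  {l u w w' : ℝ → ι → ℝ}

/-- Measurable `w` with `l ≤ w ≤ u` on the half-line: the domain of the monotone iteration. -/
structure IsBetween (l u w : ℝ → ι → ℝ) : Prop where
  measurable : Measurable w
  mem_Icc : ∀ z, 0 < z → w z ∈ Icc (l z) (u z)

/-- A source term for which the Green operators define a monotone map on the functions between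
`l` and `u`. -/
structure IsMonotoneSource (C : ℝ) (F : ℝ → (ι → ℝ) → ι → ℝ) (l u : ℝ → ι → ℝ) : Prop where
  continuous : Continuous (Function.uncurry F)
  monotoneOn : ∀ z, 0 < z → MonotoneOn (F z) (Icc (l z) (u z))
  abs_le : ∀ z, 0 < z → ∀ w ∈ Icc (l z) (u z), ∀ i, |F z w i| ≤ C * (1 + z)

/-- The source whose fixed points under `greenMap` solve the system
`radialOp (κ i) wᵢ = N z w i`. -/
def shiftedSource (κ : ι → ℕ) (a : ℝ) (N : ℝ → (ι → ℝ) → ι → ℝ) (z : ℝ) (w : ι → ℝ) (i : ι) : ℝ :=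
  (a ^ 2 * z + a * (κ i + 1)) * w i - N z w i

/-- The map of the monotone iteration: the Green operators applied to the source evaluated along
`w`. -/
def greenMap (κ : ι → ℕ) (a : ℝ) (F : ℝ → (ι → ℝ) → ι → ℝ) (w : ℝ → ι → ℝ) (z : ℝ) (i : ι) : ℝ :=
  green (κ i) a (fun x => F x (w x) i) z

lemma greenMap_congr (h : EqOn w w' (Ioi 0)) :
    EqOn (greenMap κ a F w) (greenMap κ a F w') (Ici 0) := fun z hz => funext fun i =>
  expTail_congr (expMean_congr fun x hx => by rw [h hx]) hz

lemma exists_tendsto_of_monotone_between {W : ℕ → ℝ → ι → ℝ} (hW : ∀ n, IsBetween l u (W n))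
    (hmono : ∀ z, 0 < z → Monotone fun n => W n z) :
    ∃ w, IsBetween l u w ∧ ∀ z, 0 < z → Tendsto (fun n => W n z) atTop (𝓝 (w z)) := by
  have hlim (z : ℝ) (hz : 0 < z) :
      Tendsto (fun n => W n z) atTop (𝓝 fun i => ⨆ n, W n z i) :=
    tendsto_pi_nhds.2 fun i => tendsto_atTop_ciSup (fun m n hmn => hmono z hz hmn i)
      ⟨u z i, by rintro _ ⟨n, rfl⟩; exact ((hW n).mem_Icc z hz).2 i⟩
  exact ⟨fun z i => ⨆ n, W n z i, ⟨measurable_pi_lambda _ fun i => Measurable.iSup fun n =>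
    (measurable_pi_apply i).comp (hW n).measurable, fun z hz =>
      isClosed_Icc.mem_of_tendsto (hlim z hz) (Eventually.of_forall fun n => (hW n).mem_Icc z hz)⟩,
    hlim⟩

section Countable

variable [Countable ι]

namespace IsMonotoneSource

lemma isLinearlyBounded (hF : IsMonotoneSource C F l u) (hw : IsBetween l u w) (i : ι) :
    IsLinearlyBounded C (fun x => F x (w x) i) := by
  refine ⟨?_, fun x hx => hF.abs_le x hx _ (hw.mem_Icc x hx) i⟩
  exact (measurable_pi_apply i).comp
    (hF.continuous.measurable.comp (measurable_id.prodMk hw.measurable))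

lemma greenMap_mono (hF : IsMonotoneSource C F l u) (ha : 0 < a) (hw : IsBetween l u w)
    (hw' : IsBetween l u w') (h : ∀ z, 0 < z → w z ≤ w' z) {z : ℝ} (hz : 0 < z) :
    greenMap κ a F w z ≤ greenMap κ a F w' z := fun i =>
  green_mono (hF.isLinearlyBounded hw i) (hF.isLinearlyBounded hw' i) ha
    (fun x hx => hF.monotoneOn x hx (hw.mem_Icc x hx) (hw'.mem_Icc x hx) (h x hx) i) hz.le

lemma tendsto_greenMap (hF : IsMonotoneSource C F l u) (ha : 0 < a) {W : ℕ → ℝ → ι → ℝ}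
    (hW : ∀ n, IsBetween l u (W n))
    (hlim : ∀ z, 0 < z → Tendsto (fun n => W n z) atTop (𝓝 (w z))) {z : ℝ} (hz : 0 ≤ z) :
    Tendsto (fun n => greenMap κ a F (W n) z) atTop (𝓝 (greenMap κ a F w z)) :=
  tendsto_pi_nhds.2 fun i => tendsto_green (fun n => hF.isLinearlyBounded (hW n) i) ha
    (fun x hx => (((continuous_apply i).comp hF.continuous).tendsto (x, w x)).comp
      (tendsto_const_nhds.prodMk_nhds (hlim x hx))) hz

lemma isBetween_greenMap (hF : IsMonotoneSource C F l u) (ha : 0 < a) (hl : IsBetween l u l)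
    (hu : IsBetween l u u) (hsub : ∀ z, 0 < z → l z ≤ greenMap κ a F l z)
    (hsuper : ∀ z, 0 < z → greenMap κ a F u z ≤ u z) (hw : IsBetween l u w) :
    IsBetween l u (greenMap κ a F w) where
  measurable := measurable_pi_lambda _ fun i =>
    measurable_green (hF.isLinearlyBounded hw i).measurable
  mem_Icc z hz :=
    ⟨(hsub z hz).trans (hF.greenMap_mono ha hl hw (fun x hx => (hw.mem_Icc x hx).1) hz),
      (hF.greenMap_mono ha hw hu (fun x hx => (hw.mem_Icc x hx).2) hz).trans (hsuper z hz)⟩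

end IsMonotoneSource

lemma exists_fixedPoint_greenMap (ha : 0 < a) (hF : IsMonotoneSource C F l u)
    (hl : IsBetween l u l) (hu : IsBetween l u u)
    (hsub : ∀ z, 0 < z → l z ≤ greenMap κ a F l z)
    (hsuper : ∀ z, 0 < z → greenMap κ a F u z ≤ u z) :
    ∃ w, IsBetween l u w ∧ EqOn (greenMap κ a F w) w (Ici 0) := by
  set W : ℕ → ℝ → ι → ℝ := fun n => (greenMap κ a F)^[n] l
  have hWsucc (n : ℕ) : W (n + 1) = greenMap κ a F (W n) :=
    Function.iterate_succ_apply' _ _ _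
  have hW (n : ℕ) : IsBetween l u (W n) := by
    induction n with
    | zero => exact hl
    | succ n ih => rw [hWsucc]; exact hF.isBetween_greenMap ha hl hu hsub hsuper ih
  have hmono (n : ℕ) : ∀ z, 0 < z → W n z ≤ W (n + 1) z := by
    induction n with
    | zero => exact hsub
    | succ n ih =>
      intro z hz
      rw [hWsucc, hWsucc (n + 1)]
      exact hF.greenMap_mono ha (hW n) (hW (n + 1)) ih hz
  obtain ⟨w, hw, hlim⟩ := exists_tendsto_of_monotone_between hW
    fun z hz => monotone_nat_of_le_succ fun n => hmono n z hz
  have hfix : EqOn (greenMap κ a F w) w (Ioi 0) := fun z hz =>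
    tendsto_nhds_unique (hF.tendsto_greenMap ha hW hlim hz.le)
      (by simpa only [hWsucc] using (tendsto_add_atTop_iff_nat 1).2 (hlim z hz))
  exact ⟨greenMap κ a F w, hF.isBetween_greenMap ha hl hu hsub hsuper hw, greenMap_congr hfix⟩

end Countable

variable [Fintype ι]

lemma hasContDiffExtension_of_fixedPoint (ha : 0 < a) (hF : IsMonotoneSource C F l u)
    (hFs : ContDiff ℝ (⊤ : ℕ∞) (Function.uncurry F)) (hw : IsBetween l u w)
    (hfix : EqOn (greenMap κ a F w) w (Ici 0)) (n : ℕ) : HasContDiffExtension n w := by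
  induction n with
  | zero =>
    exact (HasContDiffExtension.pi fun i => hasContDiffExtension_zero_green
      (hF.isLinearlyBounded hw i) ha).congr hfix
  | succ n ih =>
    refine (HasContDiffExtension.pi fun i => hasContDiffExtension_succ_green
      (hF.isLinearlyBounded hw i) ha ?_).congr hfix
    exact HasContDiffExtension.comp (F := fun z w => F z w i)
      ((contDiff_pi.1 (contDiff_infty.1 hFs n)) i) ih

theorem exists_solution_between_barriers (ha : 0 < a)
    (hN : ContDiff ℝ (⊤ : ℕ∞) (Function.uncurry N))
    (hF : IsMonotoneSource C (shiftedSource κ a N) l u) (hlu : ∀ z, 0 < z → l z ≤ u z)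
    (hl : ∀ i, IsBarrier (l · i)) (hu : ∀ i, IsBarrier (u · i))
    (hsub : ∀ z, 0 < z → ∀ i, N z (l z) i ≤ radialOp (κ i) (l · i) z)
    (hsuper : ∀ z, 0 < z → ∀ i, radialOp (κ i) (u · i) z ≤ N z (u z) i) :
    ∃ w : ℝ → ι → ℝ, ContDiff ℝ 2 w ∧ (∀ n, HasContDiffExtension n w) ∧
      (∀ z, 0 ≤ z → ∀ i, radialOp (κ i) (w · i) z = N z (w z) i) ∧
      ∀ z, 0 < z → w z ∈ Icc (l z) (u z) := by
  have hbl : IsBetween l u l :=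
    ⟨measurable_pi_lambda _ fun i => (hl i).measurable, fun z hz => ⟨le_rfl, hlu z hz⟩⟩
  have hbu : IsBetween l u u :=
    ⟨measurable_pi_lambda _ fun i => (hu i).measurable, fun z hz => ⟨hlu z hz, le_rfl⟩⟩
  have hFs : ContDiff ℝ (⊤ : ℕ∞) (Function.uncurry (shiftedSource κ a N)) := by
    have hNi := contDiff_pi.1 hN
    simp only [Function.uncurry_def] at hNi
    refine contDiff_pi.2 fun i => ?_
    simp only [Function.uncurry_def, shiftedSource]
    exact ContDiff.sub (by fun_prop) (hNi i)
  obtain ⟨w, hw, hfix⟩ := exists_fixedPoint_greenMap ha hF hbl hbu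
    (fun z hz i => le_green (hF.isLinearlyBounded hbl i) ha (hl i)
      (fun x hx => sub_le_sub_left (hsub x hx i) _) hz)
    (fun z hz i => green_le (hF.isLinearlyBounded hbu i) ha (hu i)
      (fun x hx => sub_le_sub_left (hsuper x hx i) _) hz)
  have hext := hasContDiffExtension_of_fixedPoint ha hF hFs hw hfix
  choose G hG hGw hGode using fun i => exists_contDiff_extension_green (κ := κ i)
    (hF.isLinearlyBounded hw i) ha (HasContDiffExtension.comp
      (F := fun z w => shiftedSource κ a N z w i) (contDiff_pi.1 (contDiff_infty.1 hFs 1) i)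
      (hext 1))
  have hGfix : EqOn w (fun z i => G i z) (Ici 0) := fun z hz =>
    (hfix hz).symm.trans (funext fun i => (hGw i hz).symm)
  refine ⟨fun z i => G i z, contDiff_pi.2 hG, fun n => (hext n).congr hGfix, fun z hz i => ?_,
    fun z hz => hGfix hz.le ▸ hw.mem_Icc z hz⟩
  rw [hGode i z hz, hGfix hz, shiftedSource]
  ring

end MonotoneIteration

/-! ### The reduced Landau–de Gennes system -/

lemma shiftedSource_mono {ι : Type*} {κ : ι → ℕ} {a z : ℝ} {N : ℝ → (ι → ℝ) → ι → ℝ}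
    {w w' : ι → ℝ} {i : ι} (ha : 0 ≤ a) (hz : 0 ≤ z) (h : w i ≤ w' i)
    (hN : N z w' i - N z w i ≤ a * (w' i - w i)) :
    shiftedSource κ a N z w i ≤ shiftedSource κ a N z w' i := by
  have hshift : 0 ≤ (a ^ 2 * z + a * κ i) * (w' i - w i) :=
    mul_nonneg (by positivity) (sub_nonneg.2 h)
  unfold shiftedSource
  linarith

/-- Nonlinearity of the equation for the amplitude `A` in the variable `z = r²`, where
`r ^ κ * A` is the in-plane component `u` divided by its limit at infinity. -/
def amplitudeTerm (κ : ℕ) (ν η z A q : ℝ) : ℝ :=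
  ν * A * (z ^ κ * A ^ 2 - 1 + η ^ 2 / 3 * ((1 - q) * (3 - q)))

/-- Nonlinearity of the equation for the normalised biaxiality `q`, where
`1 - η + η * q` is the out-of-plane component `v` divided by its limit at infinity. -/
def biaxialTerm (κ : ℕ) (ν η z A q : ℝ) : ℝ :=
  ν * ((1 - η + η * q) * (3 - η + η * q) * q / 3 - z ^ κ * A ^ 2 * (2 - q))

/-- The nonlinearity of the reduced system for `w = ![A, q]`. -/
def reducedTerm (κ : ℕ) (ν η z : ℝ) (w : Fin 2 → ℝ) : Fin 2 → ℝ :=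
  ![amplitudeTerm κ ν η z (w 0) (w 1), biaxialTerm κ ν η z (w 0) (w 1)]

/-- The values `![A, q]` on which the shifted nonlinearity is monotone. -/
def physicalBox (κ : ℕ) (z : ℝ) : Set (Fin 2 → ℝ) :=
  {w | 0 ≤ w ∧ z ^ κ * w 0 ^ 2 ≤ 1 ∧ w 1 ≤ 1}

lemma contDiff_reducedTerm {κ : ℕ} {ν η : ℝ} :
    ContDiff ℝ (⊤ : ℕ∞) (Function.uncurry (reducedTerm κ ν η)) := by
  refine contDiff_pi.2 fun i => ?_
  fin_cases i <;>
    simp only [reducedTerm, amplitudeTerm, biaxialTerm, Function.uncurry_def, Fin.zero_eta,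
      Fin.mk_one, cons_val_zero, cons_val_one] <;> fun_prop

section Sources

variable {κ : ℕ} {ν η z A A' q q' M : ℝ}

lemma amplitudeTerm_sub_le (hν : 0 ≤ ν) (hη : |η| ≤ 1) (hz : 0 ≤ z) (hA : 0 ≤ A) (hAA : A ≤ A')
    (hP : z ^ κ * A' ^ 2 ≤ 1) (hq : 0 ≤ q) (hqq : q ≤ q') (hq1 : q' ≤ 1) :
    amplitudeTerm κ ν η z A' q' - amplitudeTerm κ ν η z A q ≤ 8 * ν * (A' - A) := by
  have hη2 : η ^ 2 ≤ 1 := (sq_le_one_iff_abs_le_one η).2 hη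
  set c : ℝ → ℝ := fun x => η ^ 2 / 3 * ((1 - x) * (3 - x)) with hc
  have hc_anti : c q' ≤ c q := mul_le_mul_of_nonneg_left (by nlinarith) (by positivity)
  have hc_le : c q ≤ 1 := by
    have h3 : (1 - q) * (3 - q) ≤ 3 := by nlinarith
    have : 0 ≤ (1 - q) * (3 - q) := by nlinarith
    simp only [hc]
    nlinarith
  have hcubic : z ^ κ * (A' ^ 2 + A * A' + A ^ 2) ≤ 3 :=
    calc z ^ κ * (A' ^ 2 + A * A' + A ^ 2) ≤ z ^ κ * (3 * A' ^ 2) := by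
          gcongr
          nlinarith
      _ ≤ 3 := by linarith
  have hA' : 0 ≤ A' := hA.trans hAA
  have hd : 0 ≤ A' - A := sub_nonneg.2 hAA
  calc amplitudeTerm κ ν η z A' q' - amplitudeTerm κ ν η z A q
      = ν * ((A' - A) * (z ^ κ * (A' ^ 2 + A * A' + A ^ 2) - 1 + c q))
          - ν * A' * (c q - c q') := by simp only [amplitudeTerm, hc]; ring
    _ ≤ ν * ((A' - A) * (3 - 1 + 1)) - 0 := by
        gcongr
        exact mul_nonneg (mul_nonneg hν hA') (sub_nonneg.2 hc_anti)
    _ ≤ 8 * ν * (A' - A) := by linarith [mul_nonneg hν hd]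

lemma biaxialTerm_sub_le (hν : 0 ≤ ν) (hη : |η| ≤ 1) (hz : 0 ≤ z) (hA : 0 ≤ A) (hAA : A ≤ A')
    (hP : z ^ κ * A' ^ 2 ≤ 1) (hq : 0 ≤ q) (hqq : q ≤ q') (hq1 : q' ≤ 1) :
    biaxialTerm κ ν η z A' q' - biaxialTerm κ ν η z A q ≤ 8 * ν * (q' - q) := by
  obtain ⟨hη1, hη2⟩ := abs_le.1 hη
  have hRR : z ^ κ * A ^ 2 ≤ z ^ κ * A' ^ 2 := by gcongr
  set R := z ^ κ * A ^ 2
  set R' := z ^ κ * A' ^ 2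
  set W : ℝ → ℝ := fun x => 1 - η + η * x with hW
  have hW_le (x : ℝ) (hx : 0 ≤ x) (hx1 : x ≤ 1) : 0 ≤ W x ∧ W x ≤ 2 := by
    simp only [hW]
    constructor <;> nlinarith
  obtain ⟨hWq, hWq2⟩ := hW_le q hq (hqq.trans hq1)
  obtain ⟨hWq', hWq2'⟩ := hW_le q' (hq.trans hqq) hq1
  have hslope : W q' * (W q' + 2) + q * η * (W q' + W q + 2) ≤ 14 := by
    have hqη : q * η ≤ 1 := by nlinarith
    have := mul_le_mul hqη (by linarith : W q' + W q + 2 ≤ 6) (by linarith) zero_le_one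
    nlinarith
  have hd : 0 ≤ q' - q := sub_nonneg.2 hqq
  calc biaxialTerm κ ν η z A' q' - biaxialTerm κ ν η z A q
      = ν * ((q' - q) * ((W q' * (W q' + 2) + q * η * (W q' + W q + 2)) / 3 + R))
          - ν * ((R' - R) * (2 - q')) := by simp only [biaxialTerm, hW, R, R']; ring
    _ ≤ ν * ((q' - q) * (14 / 3 + 1)) - 0 := by
        gcongr
        · linarith
        · exact mul_nonneg hν (mul_nonneg (sub_nonneg.2 hRR) (by linarith))
    _ ≤ 8 * ν * (q' - q) := by linarith [mul_nonneg hν hd]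

lemma monotoneOn_reducedSource (hν : 0 ≤ ν) (hη : |η| ≤ 1) (hz : 0 ≤ z) :
    MonotoneOn (shiftedSource ![κ, 0] (8 * ν) (reducedTerm κ ν η) z) (physicalBox κ z) := by
  rintro w ⟨hw, -, -⟩ w' ⟨-, hP, hq⟩ h i
  refine shiftedSource_mono (by positivity) hz (h i) ?_
  fin_cases i
  · exact amplitudeTerm_sub_le hν hη hz (hw 0) (h 0) hP (hw 1) (h 1) hq
  · exact biaxialTerm_sub_le hν hη hz (hw 0) (h 0) hP (hw 1) (h 1) hq

lemma reducedSource_nonneg (hν : 0 ≤ ν) (hη : |η| ≤ 1) (hz : 0 ≤ z) {w : Fin 2 → ℝ}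
    (hw : w ∈ physicalBox κ z) :
    0 ≤ shiftedSource ![κ, 0] (8 * ν) (reducedTerm κ ν η) z w := by
  have h0 : (0 : Fin 2 → ℝ) ∈ physicalBox κ z := by simp [physicalBox]
  refine le_trans (le_of_eq ?_) (monotoneOn_reducedSource hν hη hz h0 hw hw.1)
  ext i
  fin_cases i <;> simp [shiftedSource, reducedTerm, amplitudeTerm, biaxialTerm]

lemma reducedSource_le (hν : 0 ≤ ν) (hη : |η| ≤ 1) (hz : 0 ≤ z) {w : Fin 2 → ℝ}
    (hw : w ∈ physicalBox κ z) (hM : w 0 ≤ M) (i : Fin 2) :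
    shiftedSource ![κ, 0] (8 * ν) (reducedTerm κ ν η) z w i ≤
      ((8 * ν) ^ 2 + 8 * ν * (κ + 1) + ν) * (M + 1) * (1 + z) := by
  obtain ⟨hw0, hP, hq⟩ := hw
  have hA : 0 ≤ w 0 := hw0 0
  have hR : 0 ≤ z ^ κ * w 0 ^ 2 := by positivity
  have hM0 : 0 ≤ M := hA.trans hM
  have htop : ![w 0, 1] ∈ physicalBox κ z :=
    ⟨fun j => by fin_cases j <;> simp [hA], by simpa using hP, by simp⟩
  refine (monotoneOn_reducedSource hν hη hz ⟨hw0, hP, hq⟩ htop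
    (fun j => by fin_cases j <;> simp [hq]) i).trans ?_
  fin_cases i <;>
    simp only [shiftedSource, reducedTerm, amplitudeTerm, biaxialTerm, Fin.zero_eta, Fin.mk_one,
      cons_val_zero, cons_val_one, Nat.cast_zero]
  · calc _ = ((8 * ν) ^ 2 * z + 8 * ν * (κ + 1) + ν * (1 - z ^ κ * w 0 ^ 2)) * w 0 := by ring
      _ ≤ (((8 * ν) ^ 2 + 8 * ν * (κ + 1) + ν) * (1 + z)) * (M + 1) := by
          have : 0 ≤ (8 * ν) ^ 2 + (8 * ν * (κ + 1) + ν) * z := by positivity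
          have := mul_nonneg hν hR
          exact mul_le_mul (by linarith) (by linarith) hA (by positivity)
      _ = _ := by ring
  · have hνR := mul_le_mul_of_nonneg_left hP hν
    have : 0 ≤ 64 * ν ^ 2 + ν + 8 * ν * κ + z * (8 * ν * (κ + 1) + ν) := by positivity
    have : 0 ≤ ((8 * ν) ^ 2 + 8 * ν * (κ + 1) + ν) * M * (1 + z) := by positivity
    linarith

lemma isMonotoneSource_reducedTerm {l u : ℝ → Fin 2 → ℝ} (hν : 0 ≤ ν) (hη : |η| ≤ 1)
    (hbox : ∀ z, 0 < z → Icc (l z) (u z) ⊆ physicalBox κ z) (hM : ∀ z, 0 < z → u z 0 ≤ M) :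
    IsMonotoneSource (((8 * ν) ^ 2 + 8 * ν * (κ + 1) + ν) * (M + 1))
      (shiftedSource ![κ, 0] (8 * ν) (reducedTerm κ ν η)) l u where
  continuous := by
    have hN (i : Fin 2) := (contDiff_pi.1 (contDiff_reducedTerm (κ := κ) (ν := ν) (η := η)) i)
    refine continuous_pi fun i => ?_
    have := (hN i).continuous
    simp only [Function.uncurry_def] at this
    simp only [Function.uncurry_def, shiftedSource]
    fun_prop
  monotoneOn z hz := (monotoneOn_reducedSource hν hη hz.le).mono (hbox z hz)
  abs_le z hz w hw i := by
    rw [abs_of_nonneg (reducedSource_nonneg hν hη hz.le (hbox z hz hw) i)]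
    exact reducedSource_le hν hη hz.le (hbox z hz hw) ((hw.2 0).trans (hM z hz)) i

end Sources

/-! ### Barriers for the reduced system -/

/-- The decreasing profile `β / (z + β)` from `1` at `z = 0` to `0` at infinity, in terms of which
the logarithmic derivatives of all barriers are expressed. -/
def decay (β z : ℝ) : ℝ := β / (z + β)

/-- The upper barrier for the amplitude. -/
def upperAmplitude (κ : ℕ) (α z : ℝ) : ℝ := (z + α) ^ (-(κ / 2 : ℝ))

/-- The lower barrier for the normalised biaxiality. -/
def lowerBiaxial (κ : ℕ) (β z : ℝ) : ℝ := (1 - decay β z) ^ κ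

/-- The lower barrier for the amplitude, chosen so that
`z ^ κ * lowerAmplitude² = ℓ (4 - ℓ) / 3` for `ℓ = lowerBiaxial`. -/
def lowerAmplitude (κ : ℕ) (β z : ℝ) : ℝ :=
  upperAmplitude κ β z * √((4 - lowerBiaxial κ β z) / 3)

/-- The ratio `ℓ / (4 - ℓ)` for `ℓ = lowerBiaxial`, which enters the logarithmic derivative of
`lowerAmplitude`. -/
def biaxialRatio (κ : ℕ) (β z : ℝ) : ℝ := lowerBiaxial κ β z / (4 - lowerBiaxial κ β z)

section Barriers

variable {κ : ℕ} {ν η α β z : ℝ}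

lemma radialOp_eq_of_hasDerivAt {S E : ℝ → ℝ} {E' : ℝ} (hz : 0 < z)
    (hS : ∀ x, 0 < x → HasDerivAt S (S x * ((E x - κ) / (2 * x))) x)
    (hE : HasDerivAt E (E' / z) z) :
    radialOp κ S z = S z / (4 * z) * (E z ^ 2 - κ ^ 2 + 2 * E') := by
  have hS' : deriv S =ᶠ[𝓝 z] fun x => S x * ((E x - κ) / (2 * x)) := by
    filter_upwards [lt_mem_nhds hz] with x hx using (hS x hx).deriv
  have hS'' := (hS z hz).fun_mul ((hE.sub_const (κ : ℝ)).fun_div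
    ((hasDerivAt_id' z).const_mul 2) (by positivity))
  rw [radialOp, hS'.deriv_eq, hS'.eq_of_nhds, hS''.deriv]
  field_simp
  ring

lemma decay_pos (hβ : 0 < β) (hz : 0 ≤ z) : 0 < decay β z := div_pos hβ (by linarith)

lemma decay_le_one (hβ : 0 < β) (hz : 0 ≤ z) : decay β z ≤ 1 :=
  (div_le_one (by linarith)).2 (by linarith)

lemma one_sub_decay (hβ : 0 < β) (hz : 0 ≤ z) : 1 - decay β z = z / (z + β) := by
  have : z + β ≠ 0 := by linarith
  unfold decay
  field_simp
  ring

lemma one_sub_decay_div (hβ : 0 < β) (hz : 0 < z) : (1 - decay β z) / z = decay β z / β := by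
  rw [one_sub_decay hβ hz.le, decay]
  field_simp

lemma contDiffAt_decay (hβ : 0 < β) (hz : 0 ≤ z) : ContDiffAt ℝ 2 (decay β) z :=
  contDiffAt_const.div (by fun_prop) (by linarith)

lemma hasDerivAt_decay (hβ : 0 < β) (hz : 0 < z) :
    HasDerivAt (decay β) (-(decay β z * (1 - decay β z)) / z) z := by
  have hy := add_pos hz hβ
  refine ((hasDerivAt_const z β).fun_div ((hasDerivAt_id z).add_const β) hy.ne').congr_deriv ?_
  rw [one_sub_decay hβ hz.le, decay]
  simp only [id]
  field_simp
  ring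

lemma lowerBiaxial_pos (hβ : 0 < β) (hz : 0 < z) : 0 < lowerBiaxial κ β z := by
  rw [lowerBiaxial, one_sub_decay hβ hz.le]
  positivity

lemma lowerBiaxial_mem_Icc (hβ : 0 < β) (hz : 0 ≤ z) : lowerBiaxial κ β z ∈ Icc (0 : ℝ) 1 :=
  have h := sub_nonneg.2 (decay_le_one hβ hz)
  ⟨pow_nonneg h κ, pow_le_one₀ h (sub_le_self 1 (decay_pos hβ hz).le)⟩

lemma lowerBiaxial_le (hκ : κ ≠ 0) (hβ : 0 < β) (hz : 0 ≤ z) :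
    lowerBiaxial κ β z ≤ 1 - decay β z :=
  pow_le_of_le_one (sub_nonneg.2 (decay_le_one hβ hz)) (sub_le_self 1 (decay_pos hβ hz).le) hκ

lemma one_sub_lowerBiaxial_le (hβ : 0 < β) (hz : 0 ≤ z) :
    1 - lowerBiaxial κ β z ≤ κ * decay β z := by
  have h := one_add_mul_le_pow (a := -decay β z) (by linarith [decay_le_one hβ hz]) κ
  rw [← sub_eq_add_neg] at h
  rw [lowerBiaxial]
  linarith

lemma hasDerivAt_lowerBiaxial (hβ : 0 < β) (hz : 0 < z) :
    HasDerivAt (lowerBiaxial κ β) (lowerBiaxial κ β z * (κ * decay β z / z)) z := by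
  refine (((hasDerivAt_decay hβ hz).const_sub 1).fun_pow κ).congr_deriv ?_
  rcases κ with _ | n
  · simp
  · simp only [lowerBiaxial, Nat.add_sub_cancel, pow_succ]
    ring

lemma isBarrier_lowerBiaxial (hβ : 0 < β) : IsBarrier (lowerBiaxial κ β) where
  measurable := by unfold lowerBiaxial decay; fun_prop
  contDiffAt z hz := (contDiffAt_const.sub (contDiffAt_decay hβ hz)).pow κ
  bounded := ⟨1, fun z hz => by
    obtain ⟨h0, h1⟩ := lowerBiaxial_mem_Icc (κ := κ) hβ hz
    rwa [abs_of_nonneg h0]⟩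

lemma hasDerivAt_biaxialRatio (hβ : 0 < β) (hz : 0 < z) :
    HasDerivAt (biaxialRatio κ β)
      (κ * decay β z * (biaxialRatio κ β z * (1 + biaxialRatio κ β z)) / z) z := by
  have hℓ : 4 - lowerBiaxial κ β z ≠ 0 := by linarith [(lowerBiaxial_mem_Icc (κ := κ) hβ hz.le).2]
  have h := hasDerivAt_lowerBiaxial (κ := κ) hβ hz
  refine (h.fun_div (h.const_sub 4) hℓ).congr_deriv ?_
  unfold biaxialRatio
  field_simp
  ring

lemma biaxialRatio_nonneg (hβ : 0 < β) (hz : 0 ≤ z) : 0 ≤ biaxialRatio κ β z :=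
  have h := lowerBiaxial_mem_Icc (κ := κ) hβ hz
  div_nonneg h.1 (by linarith [h.2])

lemma biaxialRatio_le (hκ : κ ≠ 0) (hβ : 0 < β) (hz : 0 ≤ z) :
    biaxialRatio κ β z ≤ (1 - decay β z) / 3 :=
  div_le_div₀ (sub_nonneg.2 (decay_le_one hβ hz)) (lowerBiaxial_le hκ hβ hz) (by norm_num)
    (by linarith [(lowerBiaxial_mem_Icc (κ := κ) hβ hz).2])

lemma upperAmplitude_pos (hα : 0 < α) (hz : 0 ≤ z) : 0 < upperAmplitude κ α z :=
  rpow_pos_of_pos (by linarith) _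

lemma upperAmplitude_sq (hα : 0 < α) (hz : 0 ≤ z) :
    upperAmplitude κ α z ^ 2 = ((z + α) ^ κ)⁻¹ := by
  have hy : 0 ≤ z + α := by linarith
  rw [upperAmplitude, ← rpow_natCast, ← rpow_mul hy, ← rpow_natCast, ← rpow_neg hy]
  congr 1
  push_cast
  ring

lemma pow_mul_upperAmplitude_sq (hα : 0 < α) (hz : 0 ≤ z) :
    z ^ κ * upperAmplitude κ α z ^ 2 = lowerBiaxial κ α z := by
  rw [upperAmplitude_sq hα hz, lowerBiaxial, one_sub_decay hα hz, div_pow, div_eq_mul_inv]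

lemma upperAmplitude_le (hα : 0 < α) (hz : 0 ≤ z) :
    upperAmplitude κ α z ≤ α ^ (-(κ / 2 : ℝ)) :=
  rpow_le_rpow_of_nonpos hα (by linarith) (neg_nonpos.2 (by positivity))

lemma hasDerivAt_upperAmplitude (hα : 0 < α) (hz : 0 < z) :
    HasDerivAt (upperAmplitude κ α)
      (upperAmplitude κ α z * ((κ * decay α z - κ) / (2 * z))) z := by
  have hy := add_pos hz hα
  refine (((hasDerivAt_id z).add_const α).rpow_const (p := -(κ / 2 : ℝ))
    (Or.inl hy.ne')).congr_deriv ?_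
  rw [id, rpow_sub_one hy.ne', upperAmplitude, decay]
  field_simp
  ring

lemma isBarrier_upperAmplitude (hα : 0 < α) : IsBarrier (upperAmplitude κ α) where
  measurable := by unfold upperAmplitude; fun_prop
  contDiffAt z hz := ContDiffAt.rpow_const_of_ne (by fun_prop) (by linarith)
  bounded := ⟨α ^ (-(κ / 2 : ℝ)), fun z hz => by
    rw [abs_of_pos (upperAmplitude_pos hα hz)]
    exact upperAmplitude_le hα hz⟩

lemma lowerAmplitude_pos (hβ : 0 < β) (hz : 0 ≤ z) : 0 < lowerAmplitude κ β z :=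
  mul_pos (upperAmplitude_pos hβ hz)
    (sqrt_pos.2 (by linarith [(lowerBiaxial_mem_Icc (κ := κ) hβ hz).2]))

lemma lowerAmplitude_sq (hβ : 0 < β) (hz : 0 ≤ z) :
    lowerAmplitude κ β z ^ 2 = ((z + β) ^ κ)⁻¹ * ((4 - lowerBiaxial κ β z) / 3) := by
  rw [lowerAmplitude, mul_pow, upperAmplitude_sq hβ hz,
    sq_sqrt (by linarith [(lowerBiaxial_mem_Icc (κ := κ) hβ hz).2])]

lemma pow_mul_lowerAmplitude_sq (hβ : 0 < β) (hz : 0 ≤ z) :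
    z ^ κ * lowerAmplitude κ β z ^ 2 = lowerBiaxial κ β z * (4 - lowerBiaxial κ β z) / 3 := by
  rw [lowerAmplitude_sq hβ hz, ← upperAmplitude_sq hβ hz, ← mul_assoc,
    pow_mul_upperAmplitude_sq hβ hz, mul_div_assoc]

lemma lowerAmplitude_le_upperAmplitude (hα : 0 < α) (hβ : 3 * α ≤ 2 * β) (hz : 0 ≤ z) :
    lowerAmplitude κ β z ≤ upperAmplitude κ α z := by
  have hβ0 : 0 < β := by linarith
  have hzα : 0 < z + α := by linarith
  have hbernoulli : 1 + κ * ((β - α) / (z + α)) ≤ (z + β) ^ κ / (z + α) ^ κ :=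
    calc 1 + κ * ((β - α) / (z + α)) ≤ (1 + (β - α) / (z + α)) ^ κ :=
          one_add_mul_le_pow (by linarith [div_nonneg (by linarith : 0 ≤ β - α) hzα.le]) κ
      _ = (z + β) ^ κ / (z + α) ^ κ := by
          rw [← div_pow]
          congr 1
          field_simp
          ring
  refine (sq_le_sq₀ (lowerAmplitude_pos hβ0 hz).le (upperAmplitude_pos hα hz).le).1 ?_
  rw [lowerAmplitude_sq hβ0 hz, upperAmplitude_sq hα hz, inv_mul_eq_div,
    div_le_iff₀ (by positivity), inv_mul_eq_div]
  refine le_trans ?_ hbernoulli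
  calc (4 - lowerBiaxial κ β z) / 3 ≤ 1 + κ * (β / 3 / (z + β)) := by
        have h := one_sub_lowerBiaxial_le (κ := κ) hβ0 hz
        rw [div_right_comm, ← decay]
        linarith
    _ ≤ 1 + κ * ((β - α) / (z + α)) := by gcongr <;> linarith

lemma hasDerivAt_lowerAmplitude (hβ : 0 < β) (hz : 0 < z) :
    HasDerivAt (lowerAmplitude κ β)
      (lowerAmplitude κ β z * ((κ * decay β z * (1 - biaxialRatio κ β z) - κ) / (2 * z))) z := by
  have hg : 0 < (4 - lowerBiaxial κ β z) / 3 := by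
    linarith [(lowerBiaxial_mem_Icc (κ := κ) hβ hz.le).2]
  refine ((hasDerivAt_upperAmplitude hβ hz).fun_mul
    ((((hasDerivAt_lowerBiaxial hβ hz).const_sub 4).div_const 3).sqrt hg.ne')).congr_deriv ?_
  have hs := sqrt_pos.2 hg
  have hs2 := sq_sqrt hg.le
  unfold lowerAmplitude biaxialRatio
  set s := √((4 - lowerBiaxial κ β z) / 3)
  have hℓ : lowerBiaxial κ β z = 4 - 3 * s ^ 2 := by linarith
  rw [hℓ, sub_sub_cancel]
  field_simp
  ring

lemma IsBarrier.mul {S T : ℝ → ℝ} (hS : IsBarrier S) (hT : IsBarrier T) :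
    IsBarrier fun z => S z * T z where
  measurable := hS.measurable.mul hT.measurable
  contDiffAt z hz := (hS.contDiffAt z hz).mul (hT.contDiffAt z hz)
  bounded := by
    obtain ⟨K, hK⟩ := hS.bounded
    obtain ⟨L, hL⟩ := hT.bounded
    refine ⟨K * L, fun z hz => ?_⟩
    rw [abs_mul]
    exact mul_le_mul (hK z hz) (hL z hz) (abs_nonneg _) ((abs_nonneg _).trans (hK z hz))

lemma isBarrier_lowerAmplitude (hβ : 0 < β) : IsBarrier (lowerAmplitude κ β) := by
  have hℓ := isBarrier_lowerBiaxial (κ := κ) hβ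
  refine (isBarrier_upperAmplitude hβ).mul
    ⟨((hℓ.measurable.const_sub 4).div_const 3).sqrt, fun z hz => ?_, 2, fun z hz => ?_⟩ <;>
    obtain ⟨h0, h1⟩ := lowerBiaxial_mem_Icc (κ := κ) hβ hz
  · exact ((contDiffAt_const.sub (hℓ.contDiffAt z hz)).div_const 3).sqrt (by linarith)
  · rw [abs_of_nonneg (sqrt_nonneg _), sqrt_le_left (by norm_num)]
    linarith

lemma radialOp_upperAmplitude_le (hα : 0 < α) (hν : 0 ≤ ν) (h : 4 * ν * α ≤ κ) (hz : 0 < z) :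
    radialOp κ (upperAmplitude κ α) z ≤ amplitudeTerm κ ν η z (upperAmplitude κ α z) 1 := by
  rw [radialOp_eq_of_hasDerivAt hz (fun x hx => hasDerivAt_upperAmplitude hα hx)
    (((hasDerivAt_decay hα hz).const_mul (κ : ℝ)).congr_deriv (mul_div_assoc _ _ _).symm),
    amplitudeTerm, pow_mul_upperAmplitude_sq hα hz.le]
  have hU := upperAmplitude_pos (κ := κ) hα hz.le
  have hρ := decay_pos hα hz.le
  have hρ1 := sub_nonneg.2 (decay_le_one hα hz.le)
  have hℓ := one_sub_lowerBiaxial_le (κ := κ) hα hz.le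
  have hz' := one_sub_decay_div hα hz
  set U := upperAmplitude κ α z
  set ρ := decay α z
  calc U / (4 * z) * ((κ * ρ) ^ 2 - κ ^ 2 + 2 * (κ * -(ρ * (1 - ρ))))
      = -(κ * U / 4 * ((1 - ρ) / z) * (κ + (κ + 2) * ρ)) := by field_simp; ring
    _ ≤ -(κ * U / 4 * (ρ / α) * (4 * ν * α)) := by
        rw [hz']
        gcongr
        exact h.trans (le_add_of_nonneg_right (by positivity))
    _ = -(ν * U * (κ * ρ)) := by field_simp
    _ ≤ -(ν * U * (1 - lowerBiaxial κ α z)) := by gcongr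
    _ = _ := by ring

lemma biaxialTerm_le_radialOp_lowerBiaxial (hκ : κ ≠ 0) (hβ : 0 < β) (hν : 0 ≤ ν) (hη : |η| ≤ 1)
    (h : κ ≤ ν * (1 + η) * β) (hz : 0 < z) :
    biaxialTerm κ ν η z (lowerAmplitude κ β z) (lowerBiaxial κ β z) ≤
      radialOp 0 (lowerBiaxial κ β) z := by
  have hderiv (x : ℝ) (hx : 0 < x) : HasDerivAt (lowerBiaxial κ β)
      (lowerBiaxial κ β x * ((2 * (κ * decay β x) - (0 : ℕ)) / (2 * x))) x :=
    (hasDerivAt_lowerBiaxial hβ hx).congr_deriv (by push_cast; field_simp; ring)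
  rw [radialOp_eq_of_hasDerivAt hz hderiv ((((hasDerivAt_decay hβ hz).const_mul (κ : ℝ)).const_mul
    2).congr_deriv (by rw [← mul_div_assoc, ← mul_div_assoc])), biaxialTerm,
    pow_mul_lowerAmplitude_sq hβ hz.le]
  obtain ⟨hℓ0, hℓ1⟩ := lowerBiaxial_mem_Icc (κ := κ) hβ hz.le
  have hℓρ := lowerBiaxial_le hκ hβ hz.le
  have hρ := decay_pos hβ hz.le
  have hρ1 := decay_le_one hβ hz.le
  have hz' := one_sub_decay_div hβ hz
  set ℓ := lowerBiaxial κ β z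
  set ρ := decay β z
  obtain ⟨hη1, hη2⟩ := abs_le.1 hη
  have hη3 : 0 ≤ 1 + η := by linarith
  have hηℓ : η * (1 - ℓ) ≤ 1 - ℓ := mul_le_of_le_one_left (by linarith) hη2
  calc _ = -(ν * (1 + η) * ℓ / 3 * ((1 - ℓ) * (4 - ℓ + (1 - η * (1 - ℓ))))) := by ring
    _ ≤ -(ν * (1 + η) * ℓ / 3 * (ρ * 3)) := by gcongr <;> linarith
    _ = -(ℓ * (ρ / β) * (ν * (1 + η) * β)) := by field_simp
    _ ≤ -(ℓ * (ρ / β) * κ) := by gcongr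
    _ ≤ -(ℓ * (ρ / β) * κ * ρ) := neg_le_neg (mul_le_of_le_one_right (by positivity) hρ1)
    _ ≤ ℓ * (κ * ρ) ^ 2 / z - ℓ * ((1 - ρ) / z) * κ * ρ := by
        rw [hz']
        linarith [(by positivity : 0 ≤ ℓ * (κ * ρ) ^ 2 / z)]
    _ = _ := by push_cast; field_simp; ring

/-- With `E = K ρ (1 - m)` the right-hand side is `E² - K² + 2 z E'` when `z ρ' = -ρ (1 - ρ)` and
`z m' = K ρ m (1 + m)`. -/
lemma lowerAmplitude_logDeriv_bound {K ρ m : ℝ} (hK : 1 ≤ K) (hρ : 0 ≤ ρ) (hm : 0 ≤ m)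
    (hmρ : m ≤ (1 - ρ) / 3) :
    -(6 * K ^ 2 * (1 - ρ)) ≤ (K * ρ * (1 - m)) ^ 2 - K ^ 2
      + 2 * (K * (-(ρ * (1 - ρ))) * (1 - m) - K * ρ * (K * ρ * (m * (1 + m)))) := by
  have hρ1 : 0 ≤ 1 - ρ := by linarith
  have hT : 0 ≤ ρ * (1 - m) := mul_nonneg hρ (by linarith)
  have hT1 : ρ * (1 - m) ≤ 1 := mul_le_one₀ (by linarith) (by linarith) (by linarith)
  have hρm : ρ * m ≤ (1 - ρ) / 3 := (mul_le_of_le_one_left hm (by linarith)).trans hmρ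
  have hsq : K ^ 2 * (1 - (ρ * (1 - m)) ^ 2) ≤ K ^ 2 * ((1 - ρ) * (8 / 3)) := by
    gcongr
    calc 1 - (ρ * (1 - m)) ^ 2 = (1 - ρ + ρ * m) * (1 + ρ * (1 - m)) := by ring
      _ ≤ (1 - ρ + (1 - ρ) / 3) * (1 + 1) := by gcongr
      _ = _ := by ring
  have hcross : 2 * (K * ((1 - ρ) * (ρ * (1 - m)))) ≤ 2 * (K ^ 2 * ((1 - ρ) * 1)) := by
    gcongr
    exact le_self_pow₀ hK two_ne_zero
  have hm' : K ^ 2 * (ρ * (ρ * m) * (1 + m)) ≤ K ^ 2 * (1 * ((1 - ρ) / 3) * (1 + 1 / 3)) := by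
    gcongr <;> linarith
  linarith [mul_nonneg (sq_nonneg K) hρ1]

lemma amplitudeTerm_le_radialOp_lowerAmplitude (hκ : κ ≠ 0) (hβ : 0 < β) (hν : 0 ≤ ν)
    (hη : |η| ≤ 1) (h : 9 * κ ^ 2 ≤ 4 * (ν * (1 - η ^ 2) * β)) (hz : 0 < z) :
    amplitudeTerm κ ν η z (lowerAmplitude κ β z) (lowerBiaxial κ β z) ≤
      radialOp κ (lowerAmplitude κ β) z := by
  rw [radialOp_eq_of_hasDerivAt (E' := κ * (-(decay β z * (1 - decay β z))) *
      (1 - biaxialRatio κ β z) - κ * decay β z * (κ * decay β z * (biaxialRatio κ β z *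
        (1 + biaxialRatio κ β z)))) hz (fun x hx => hasDerivAt_lowerAmplitude hβ hx)
    ((((hasDerivAt_decay hβ hz).const_mul (κ : ℝ)).fun_mul
      ((hasDerivAt_biaxialRatio hβ hz).const_sub 1)).congr_deriv (by ring)),
    amplitudeTerm, pow_mul_lowerAmplitude_sq hβ hz.le]
  have hE := lowerAmplitude_logDeriv_bound (K := κ) (by exact_mod_cast Nat.one_le_iff_ne_zero.2 hκ)
    (decay_pos hβ hz.le).le (biaxialRatio_nonneg hβ hz.le) (biaxialRatio_le hκ hβ hz.le)
  have hA := lowerAmplitude_pos (κ := κ) hβ hz.le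
  obtain ⟨-, hℓ1⟩ := lowerBiaxial_mem_Icc (κ := κ) hβ hz.le
  have hℓρ := lowerBiaxial_le hκ hβ hz.le
  have hρ := decay_pos hβ hz.le
  have hz' := one_sub_decay_div hβ hz
  have hη2 : 0 ≤ 1 - η ^ 2 := sub_nonneg.2 ((sq_le_one_iff_abs_le_one η).2 hη)
  set A := lowerAmplitude κ β z
  set ℓ := lowerBiaxial κ β z
  set ρ := decay β z
  calc _ = -(ν * (1 - η ^ 2) * A / 3 * ((1 - ℓ) * (3 - ℓ))) := by ring
    _ ≤ -(ν * (1 - η ^ 2) * A / 3 * (ρ * 2)) := by gcongr <;> linarith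
    _ = -(A * (ρ / β) / 6 * (4 * (ν * (1 - η ^ 2) * β))) := by field_simp; ring
    _ ≤ -(A * (ρ / β) / 6 * (9 * κ ^ 2)) := by gcongr
    _ = A / (4 * z) * -(6 * κ ^ 2 * (1 - ρ)) := by rw [← hz']; field_simp; ring
    _ ≤ _ := mul_le_mul_of_nonneg_left hE (by positivity)

end Barriers

/-! ### The radial profile -/

/-- The lower barrier for the reduced system. -/
def lowerBarrier (κ : ℕ) (β z : ℝ) : Fin 2 → ℝ := ![lowerAmplitude κ β z, lowerBiaxial κ β z]

/-- The upper barrier for the reduced system. -/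
def upperBarrier (κ : ℕ) (α z : ℝ) : Fin 2 → ℝ := ![upperAmplitude κ α z, 1]

/-- A solution `(A, q)` of the reduced system, smooth up to `z = 0` and pinched between barriers
which force `z ^ κ * A²` and `q` to `1` at infinity at a rate governed by `β`. -/
structure IsRadialProfile (κ : ℕ) (ν η β : ℝ) (A q : ℝ → ℝ) : Prop where
  pos : 0 < β
  contDiff_amplitude : ContDiff ℝ 2 A
  contDiff_biaxiality : ContDiff ℝ 2 q
  extension_amplitude : ∀ n, HasContDiffExtension n A
  extension_biaxiality : ∀ n, HasContDiffExtension n q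
  radialOp_amplitude : ∀ z, 0 ≤ z → radialOp κ A z = amplitudeTerm κ ν η z (A z) (q z)
  radialOp_biaxiality : ∀ z, 0 ≤ z → radialOp 0 q z = biaxialTerm κ ν η z (A z) (q z)
  amplitude_pos : ∀ z, 0 < z → 0 < A z
  pow_mul_amplitude_sq_mem : ∀ z, 0 < z →
    z ^ κ * A z ^ 2 ∈ Icc (lowerBiaxial κ β z * (4 - lowerBiaxial κ β z) / 3) 1
  biaxiality_mem : ∀ z, 0 < z → q z ∈ Icc (lowerBiaxial κ β z) 1

section Profile

variable {κ : ℕ} {ν η α β z : ℝ}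

lemma lowerBarrier_le_upperBarrier (hα : 0 < α) (hβ : 3 * α ≤ 2 * β) (hz : 0 ≤ z) :
    lowerBarrier κ β z ≤ upperBarrier κ α z := fun i => by
  fin_cases i
  · exact lowerAmplitude_le_upperAmplitude hα hβ hz
  · exact (lowerBiaxial_mem_Icc (by linarith) hz).2

lemma Icc_barriers_subset_physicalBox (hα : 0 < α) (hβ : 0 < β) (hz : 0 ≤ z) :
    Icc (lowerBarrier κ β z) (upperBarrier κ α z) ⊆ physicalBox κ z := by
  rintro w ⟨hl, hu⟩
  have hA : 0 ≤ w 0 := (lowerAmplitude_pos hβ hz).le.trans (hl 0)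
  refine ⟨fun i => ?_, ?_, hu 1⟩
  · fin_cases i
    · exact hA
    · exact (lowerBiaxial_mem_Icc hβ hz).1.trans (hl 1)
  · calc z ^ κ * w 0 ^ 2 ≤ z ^ κ * upperAmplitude κ α z ^ 2 := by
          gcongr
          exact hu 0
      _ ≤ 1 := by
          rw [pow_mul_upperAmplitude_sq hα hz]
          exact (lowerBiaxial_mem_Icc hα hz).2

lemma isBarrier_lowerBarrier (hβ : 0 < β) (i : Fin 2) : IsBarrier (lowerBarrier κ β · i) := by
  fin_cases i
  · exact isBarrier_lowerAmplitude hβ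
  · exact isBarrier_lowerBiaxial hβ

lemma isBarrier_upperBarrier (hα : 0 < α) (i : Fin 2) : IsBarrier (upperBarrier κ α · i) := by
  fin_cases i
  · exact isBarrier_upperAmplitude hα
  · exact ⟨measurable_const, fun _ _ => contDiffAt_const, 1, fun _ _ => abs_one.le⟩

lemma radialOp_upperBarrier_le (hα : 0 < α) (hν : 0 ≤ ν) (h : 4 * ν * α ≤ κ) (hz : 0 < z)
    (i : Fin 2) :
    radialOp (![κ, 0] i) (upperBarrier κ α · i) z ≤ reducedTerm κ ν η z (upperBarrier κ α z) i := by
  fin_cases i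
  · exact radialOp_upperAmplitude_le hα hν h hz
  · have hP : z ^ κ * upperAmplitude κ α z ^ 2 ≤ 1 := by
      rw [pow_mul_upperAmplitude_sq hα hz.le]
      exact (lowerBiaxial_mem_Icc hα hz.le).2
    simp only [Fin.mk_one, upperBarrier, reducedTerm, biaxialTerm, cons_val_zero, cons_val_one,
      radialOp, deriv_const', mul_zero, add_zero]
    linarith [mul_le_mul_of_nonneg_left hP hν]

lemma exists_barrier_scales (hκ : κ ≠ 0) (hν : 0 < ν) (hη : |η| < 1) :
    ∃ α β : ℝ, 0 < α ∧ 3 * α ≤ 2 * β ∧ 4 * ν * α ≤ κ ∧ κ ≤ ν * (1 + η) * β ∧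
      9 * κ ^ 2 ≤ 4 * (ν * (1 - η ^ 2) * β) := by
  have : (0 : ℝ) < κ := by exact_mod_cast Nat.pos_of_ne_zero hκ
  have hη1 : 0 < 1 + η := by linarith [(abs_lt.1 hη).1]
  have hη2 : 0 < 1 - η ^ 2 := sub_pos.2 ((sq_lt_one_iff_abs_lt_one η).2 hη)
  have hα : 0 < κ / (4 * ν) := by positivity
  have hβ : 0 < κ / (ν * (1 + η)) := by positivity
  have hβ' : 0 < 9 * κ ^ 2 / (4 * (ν * (1 - η ^ 2))) := by positivity
  refine ⟨κ / (4 * ν), 3 * (κ / (4 * ν)) + κ / (ν * (1 + η)) + 9 * κ ^ 2 / (4 * (ν * (1 - η ^ 2))),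
    hα, by linarith, (mul_div_cancel₀ _ (by positivity)).le, ?_, ?_⟩
  · rw [← div_le_iff₀' (by positivity)]
    linarith
  · rw [← mul_assoc, ← div_le_iff₀' (by positivity)]
    linarith

theorem exists_isRadialProfile (hκ : κ ≠ 0) (hν : 0 < ν) (hη : |η| < 1) :
    ∃ (β : ℝ) (A q : ℝ → ℝ), IsRadialProfile κ ν η β A q := by
  obtain ⟨α, β, hα, hαβ, hα', hβ', hβ''⟩ := exists_barrier_scales hκ hν hη
  have hβ : 0 < β := by linarith
  obtain ⟨w, hw, hext, hode, hmem⟩ := exists_solution_between_barriers (by positivity : 0 < 8 * ν)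
    contDiff_reducedTerm
    (isMonotoneSource_reducedTerm hν.le hη.le
      (fun z hz => Icc_barriers_subset_physicalBox hα hβ hz.le)
      (fun z hz => upperAmplitude_le hα hz.le))
    (fun z hz => lowerBarrier_le_upperBarrier hα hαβ hz.le)
    (isBarrier_lowerBarrier hβ) (isBarrier_upperBarrier hα)
    (fun z hz i => by
      fin_cases i
      · exact amplitudeTerm_le_radialOp_lowerAmplitude hκ hβ hν.le hη.le hβ'' hz
      · exact biaxialTerm_le_radialOp_lowerBiaxial hκ hβ hν.le hη.le hβ' hz)
    (fun z hz => radialOp_upperBarrier_le hα hν.le hα' hz)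
  have hcoord (i : Fin 2) (n : ℕ) : HasContDiffExtension n (w · i) :=
    HasContDiffExtension.comp (F := fun _ v => v i) (by fun_prop) (hext n)
  refine ⟨β, (w · 0), (w · 1), ⟨hβ, contDiff_pi.1 hw 0, contDiff_pi.1 hw 1, hcoord 0, hcoord 1,
    fun z hz => hode z hz 0, fun z hz => hode z hz 1,
    fun z hz => (lowerAmplitude_pos hβ hz.le).trans_le ((hmem z hz).1 0), fun z hz => ⟨?_, ?_⟩,
    fun z hz => ⟨(hmem z hz).1 1, (hmem z hz).2 1⟩⟩⟩
  · rw [← pow_mul_lowerAmplitude_sq hβ hz.le]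
    have := (lowerAmplitude_pos (κ := κ) hβ hz.le).le
    gcongr
    exact (hmem z hz).1 0
  · exact (Icc_barriers_subset_physicalBox hα hβ hz.le (hmem z hz)).2.1

end Profile

/-! ### The Laplacian of a radial function times a harmonic polynomial -/

section PlaneLaplacian

variable {f g h : ℝ × ℝ → ℝ} {p : ℝ × ℝ}

lemma differentiable_deriv_of_contDiff_two {f : ℝ → ℝ} (hf : ContDiff ℝ 2 f) :
    Differentiable ℝ (deriv f) :=
  (hf.deriv' (n := 1)).differentiable one_ne_zero

lemma deriv_deriv_add {f g : ℝ → ℝ} (hf : ContDiff ℝ 2 f) (hg : ContDiff ℝ 2 g) (t : ℝ) :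
    deriv (deriv fun s => f s + g s) t = deriv (deriv f) t + deriv (deriv g) t := by
  have hderiv : (deriv fun s => f s + g s) = fun s => deriv f s + deriv g s :=
    funext fun s => deriv_fun_add (hf.differentiable two_ne_zero s)
      (hg.differentiable two_ne_zero s)
  rw [hderiv]
  exact deriv_fun_add (differentiable_deriv_of_contDiff_two hf t)
    (differentiable_deriv_of_contDiff_two hg t)

lemma lap_add (hf : ContDiff ℝ 2 f) (hg : ContDiff ℝ 2 g) :
    lap (fun x => f x + g x) p = lap f p + lap g p := by
  have hfst := deriv_deriv_add (f := fun s => f (s, p.2)) (g := fun s => g (s, p.2))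
    (by fun_prop) (by fun_prop) p.1
  have hsnd := deriv_deriv_add (f := fun s => f (p.1, s)) (g := fun s => g (p.1, s))
    (by fun_prop) (by fun_prop) p.2
  unfold lap
  linarith

lemma lap_const_mul (c : ℝ) : lap (fun x => c * f x) p = c * lap f p := by
  simp only [lap, deriv_const_mul_field]
  ring

lemma lap_const (c : ℝ) : lap (fun _ => c) p = 0 := by
  simp [lap]

lemma deriv_deriv_comp_sq_add_mul {G h : ℝ → ℝ} (hG : ContDiff ℝ 2 G) (hh : ContDiff ℝ 2 h)
    (c t : ℝ) :
    deriv (deriv fun s => G (s ^ 2 + c) * h s) t =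
      (4 * t ^ 2 * deriv (deriv G) (t ^ 2 + c) + 2 * deriv G (t ^ 2 + c)) * h t +
        4 * t * deriv G (t ^ 2 + c) * deriv h t + G (t ^ 2 + c) * deriv (deriv h) t := by
  have hsq (s : ℝ) : HasDerivAt (fun s => s ^ 2 + c) (2 * s) s := by
    simpa using (hasDerivAt_pow 2 s).add_const c
  have hG₁ (s : ℝ) : HasDerivAt (fun s => G (s ^ 2 + c)) (deriv G (s ^ 2 + c) * (2 * s)) s :=
    (hG.differentiable two_ne_zero _).hasDerivAt.comp s (hsq s)
  have hG₂ (s : ℝ) : HasDerivAt (fun s => deriv G (s ^ 2 + c))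
      (deriv (deriv G) (s ^ 2 + c) * (2 * s)) s :=
    (differentiable_deriv_of_contDiff_two hG _).hasDerivAt.comp s (hsq s)
  have hh₁ (s : ℝ) : HasDerivAt h (deriv h s) s := (hh.differentiable two_ne_zero s).hasDerivAt
  have hh₂ : HasDerivAt (deriv h) (deriv (deriv h) t) t :=
    (differentiable_deriv_of_contDiff_two hh t).hasDerivAt
  have hderiv : (deriv fun s => G (s ^ 2 + c) * h s) =
      fun s => deriv G (s ^ 2 + c) * (2 * s) * h s + G (s ^ 2 + c) * deriv h s :=
    funext fun s => ((hG₁ s).fun_mul (hh₁ s)).deriv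
  have hlin : HasDerivAt (fun s : ℝ => 2 * s) 2 t := by
    simpa using (hasDerivAt_id t).const_mul 2
  rw [hderiv, ((((hG₂ t).fun_mul hlin).fun_mul (hh₁ t)).fun_add ((hG₁ t).fun_mul hh₂)).deriv]
  ring

lemma lap_radial_mul_of_harmonic {G : ℝ → ℝ} (hG : ContDiff ℝ 2 G) (hh : ContDiff ℝ 2 h) {n : ℕ}
    (hharm : lap h p = 0)
    (heuler : p.1 * deriv (fun s => h (s, p.2)) p.1 + p.2 * deriv (fun s => h (p.1, s)) p.2 =
      n * h p) :
    lap (fun x => G (x.1 ^ 2 + x.2 ^ 2) * h x) p =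
      4 * radialOp n G (p.1 ^ 2 + p.2 ^ 2) * h p := by
  have hfst := deriv_deriv_comp_sq_add_mul hG (h := fun s => h (s, p.2)) (by fun_prop)
    (p.2 ^ 2) p.1
  have hsnd := deriv_deriv_comp_sq_add_mul hG (h := fun s => h (p.1, s)) (by fun_prop)
    (p.1 ^ 2) p.2
  simp only [add_comm _ (p.1 ^ 2)] at hsnd
  unfold lap at hharm ⊢
  unfold radialOp
  linear_combination hfst + hsnd + 4 * deriv G (p.1 ^ 2 + p.2 ^ 2) * heuler +
    G (p.1 ^ 2 + p.2 ^ 2) * hharm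

/-- The complex coordinate `x₁ + i x₂` on the plane. -/
def planeCoord (x : ℝ × ℝ) : ℂ := x.1 + x.2 * Complex.I

lemma contDiff_planeCoord {n : WithTop ℕ∞} : ContDiff ℝ n planeCoord :=
  (Complex.ofRealCLM.contDiff.comp contDiff_fst).add
    ((Complex.ofRealCLM.contDiff.comp contDiff_snd).mul contDiff_const)

lemma normSq_planeCoord (x : ℝ × ℝ) : Complex.normSq (planeCoord x) = x.1 ^ 2 + x.2 ^ 2 :=
  Complex.normSq_add_mul_I _ _

lemma planeCoord_polar (r φ : ℝ) :
    planeCoord (r * cos φ, r * sin φ) = r * (Complex.cos φ + Complex.sin φ * Complex.I) := by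
  simp only [planeCoord]
  push_cast
  ring

lemma planeCoord_polar_pow (κ : ℕ) (r φ : ℝ) :
    planeCoord (r * cos φ, r * sin φ) ^ κ =
      (r ^ κ * cos (κ * φ) : ℝ) + (r ^ κ * sin (κ * φ) : ℝ) * Complex.I := by
  rw [planeCoord_polar, mul_pow, Complex.cos_add_sin_mul_I_pow]
  push_cast
  ring

lemma hasDerivAt_clm_mul_line_pow (L : ℂ →L[ℝ] ℝ) (n : ℕ) (c w d : ℂ) (t : ℝ) :
    HasDerivAt (fun s : ℝ => L (c * (w + s * d) ^ n))
      (L (c * (n * (w + t * d) ^ (n - 1) * d))) t := by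
  have hline : HasDerivAt (fun s : ℝ => w + s * d) d t := by
    simpa using ((Complex.ofRealCLM.hasDerivAt (x := t)).mul_const d).const_add w
  exact L.hasFDerivAt.comp_hasDerivAt t ((hline.fun_pow n).const_mul c)

lemma deriv_clm_line_pow (L : ℂ →L[ℝ] ℝ) (n : ℕ) (w d : ℂ) (t : ℝ) :
    deriv (fun s : ℝ => L ((w + s * d) ^ n)) t = L (n * d * (w + t * d) ^ (n - 1)) := by
  rw [show L (n * d * (w + t * d) ^ (n - 1)) = L (1 * (n * (w + t * d) ^ (n - 1) * d)) by ring_nf]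
  simpa only [one_mul] using (hasDerivAt_clm_mul_line_pow L n 1 w d t).deriv

lemma deriv_deriv_clm_line_pow (L : ℂ →L[ℝ] ℝ) (n : ℕ) (w d : ℂ) (t : ℝ) :
    deriv (deriv fun s : ℝ => L ((w + s * d) ^ n)) t =
      L (n * (n - 1 : ℕ) * (w + t * d) ^ (n - 2) * d ^ 2) := by
  rw [funext (deriv_clm_line_pow L n w d), (hasDerivAt_clm_mul_line_pow L _ _ w d t).deriv]
  congr 1
  rw [Nat.sub_sub]
  ring

lemma lap_clm_planeCoord_pow (L : ℂ →L[ℝ] ℝ) (n : ℕ) (p : ℝ × ℝ) :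
    lap (fun x => L (planeCoord x ^ n)) p = 0 := by
  have hfst := deriv_deriv_clm_line_pow L n (p.2 * Complex.I) 1 p.1
  have hsnd := deriv_deriv_clm_line_pow L n p.1 Complex.I p.2
  simp only [mul_one, add_comm _ (Complex.ofReal _), one_pow] at hfst
  simp only [Complex.I_sq, mul_neg, mul_one, map_neg] at hsnd
  unfold lap planeCoord
  linear_combination hfst + hsnd

lemma euler_clm_planeCoord_pow (L : ℂ →L[ℝ] ℝ) (n : ℕ) (p : ℝ × ℝ) :
    p.1 * deriv (fun s => L (planeCoord (s, p.2) ^ n)) p.1 +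
      p.2 * deriv (fun s => L (planeCoord (p.1, s) ^ n)) p.2 = n * L (planeCoord p ^ n) := by
  have hfst := deriv_clm_line_pow L n (p.2 * Complex.I) 1 p.1
  have hsnd := deriv_clm_line_pow L n p.1 Complex.I p.2
  simp only [mul_one, add_comm _ (Complex.ofReal _)] at hfst
  have hpow : p.1 * (n * planeCoord p ^ (n - 1)) +
      p.2 * (n * Complex.I * planeCoord p ^ (n - 1)) = n * planeCoord p ^ n := by
    cases n with
    | zero => simp
    | succ m =>
      rw [Nat.add_sub_cancel, pow_succ]
      simp only [planeCoord]
      ring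
  simp only [planeCoord] at hpow ⊢
  rw [hfst, hsnd]
  simpa only [map_add, ← Complex.real_smul, map_smul, smul_eq_mul, ← Complex.ofReal_natCast]
    using congrArg L hpow

lemma contDiff_clm_planeCoord_pow (L : ℂ →L[ℝ] ℝ) (n : ℕ) {m : WithTop ℕ∞} :
    ContDiff ℝ m fun x => L (planeCoord x ^ n) :=
  L.contDiff.comp (contDiff_planeCoord.pow n)

lemma lap_radial_mul_clm_planeCoord_pow {G : ℝ → ℝ} (hG : ContDiff ℝ 2 G) (L : ℂ →L[ℝ] ℝ)
    (n : ℕ) (p : ℝ × ℝ) :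
    lap (fun x => G (x.1 ^ 2 + x.2 ^ 2) * L (planeCoord x ^ n)) p =
      4 * radialOp n G (p.1 ^ 2 + p.2 ^ 2) * L (planeCoord p ^ n) :=
  lap_radial_mul_of_harmonic hG (contDiff_clm_planeCoord_pow L n)
    (lap_clm_planeCoord_pow L n p) (euler_clm_planeCoord_pow L n p)

lemma lap_radial {G : ℝ → ℝ} (hG : ContDiff ℝ 2 G) (p : ℝ × ℝ) :
    lap (fun x => G (x.1 ^ 2 + x.2 ^ 2)) p = 4 * radialOp 0 G (p.1 ^ 2 + p.2 ^ 2) := by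
  simpa using lap_radial_mul_clm_planeCoord_pow hG Complex.reCLM 0 p

end PlaneLaplacian

/-! ### Q-tensor fields -/

section QTensor

/-- The traceless symmetric matrix with in-plane components `X`, `Y` (the coefficients of
`e₁ ⊗ e₁ - e₂ ⊗ e₂` and `e₁ ⊗ e₂ + e₂ ⊗ e₁`) and out-of-plane component `p`. -/
def qTensor (X Y p : ℝ) : Mat3 := !![X + p, Y, 0; Y, -X + p, 0; 0, 0, -2 * p]

lemma isS0_qTensor (X Y p : ℝ) : isS0 (qTensor X Y p) := by
  refine ⟨?_, ?_⟩
  · ext i j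
    fin_cases i <;> fin_cases j <;> rfl
  · simp only [qTensor, trace_fin_three_of]
    ring

lemma smul_qTensor (t X Y p : ℝ) : t • qTensor X Y p = qTensor (t * X) (t * Y) (t * p) := by
  ext i j
  fin_cases i <;> fin_cases j <;> simp [qTensor] <;> ring

lemma qTensor_add (X Y p X' Y' p' : ℝ) :
    qTensor X Y p + qTensor X' Y' p' = qTensor (X + X') (Y + Y') (p + p') := by
  ext i j
  fin_cases i <;> fin_cases j <;> simp [qTensor] <;> ring

lemma qTensor_sub (X Y p X' Y' p' : ℝ) :
    qTensor X Y p - qTensor X' Y' p' = qTensor (X - X') (Y - Y') (p - p') := by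
  ext i j
  fin_cases i <;> fin_cases j <;> simp [qTensor] <;> ring

lemma frobSq_qTensor (X Y p : ℝ) : frobSq (qTensor X Y p) = 2 * (X ^ 2 + Y ^ 2) + 6 * p ^ 2 := by
  simp only [frobSq, Fin.sum_univ_three, qTensor, of_apply, cons_val', cons_val]
  ring

lemma qTensor_mul_self (X Y p : ℝ) :
    qTensor X Y p * qTensor X Y p = ((2 * (X ^ 2 + Y ^ 2) + 6 * p ^ 2) / 3) • (1 : Mat3) +
      qTensor (2 * p * X) (2 * p * Y) ((X ^ 2 + Y ^ 2) / 3 - p ^ 2) := by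
  ext i j
  fin_cases i <;> fin_cases j <;>
    simp [qTensor, mul_apply, Fin.sum_univ_three] <;> ring

lemma trace_qTensor_mul_self (X Y p : ℝ) :
    (qTensor X Y p * qTensor X Y p).trace = 2 * (X ^ 2 + Y ^ 2) + 6 * p ^ 2 := by
  rw [qTensor_mul_self, trace_add, trace_smul, trace_one, (isS0_qTensor _ _ _).2]
  simp

lemma ELrhs_qTensor (a2 b2 c2 X Y p : ℝ) :
    ELrhs a2 b2 c2 (qTensor X Y p) =
      qTensor ((-a2 - 2 * b2 * p + c2 * (2 * (X ^ 2 + Y ^ 2) + 6 * p ^ 2)) * X)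
        ((-a2 - 2 * b2 * p + c2 * (2 * (X ^ 2 + Y ^ 2) + 6 * p ^ 2)) * Y)
        (-a2 * p - b2 * ((X ^ 2 + Y ^ 2) / 3 - p ^ 2) +
          c2 * (2 * (X ^ 2 + Y ^ 2) + 6 * p ^ 2) * p) := by
  rw [ELrhs, trace_qTensor_mul_self, qTensor_mul_self, div_eq_inv_mul, one_div,
    add_sub_cancel_left]
  simp only [smul_qTensor, qTensor_add, qTensor_sub]
  congr 1 <;> ring

lemma matLap_qTensor {X Y p : ℝ × ℝ → ℝ} (hX : ContDiff ℝ 2 X) (hp : ContDiff ℝ 2 p)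
    (x : ℝ × ℝ) :
    matLap (fun x => qTensor (X x) (Y x) (p x)) x = qTensor (lap X x) (lap Y x) (lap p x) := by
  have hneg : lap (fun x => -X x) x = -lap X x := by simpa using lap_const_mul (f := X) (-1)
  have hsub : lap (fun x => -X x + p x) x = -lap X x + lap p x := by rw [lap_add hX.neg hp, hneg]
  ext i j
  fin_cases i <;> fin_cases j
  exacts [lap_add hX hp, rfl, lap_const 0, rfl, hsub, lap_const 0, lap_const 0, lap_const 0,
    lap_const_mul (-2)]

lemma contDiff_qTensor_apply {X Y p : ℝ × ℝ → ℝ} {n : WithTop ℕ∞} (hX : ContDiff ℝ n X)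
    (hY : ContDiff ℝ n Y) (hp : ContDiff ℝ n p) (i j : Fin 3) :
    ContDiff ℝ n fun x => qTensor (X x) (Y x) (p x) i j := by
  fin_cases i <;> fin_cases j
  exacts [hX.add hp, hY, contDiff_const, hY, hX.neg.add hp, contDiff_const, contDiff_const,
    contDiff_const, contDiff_const.mul hp]

lemma vecMulVec_nvec_sub_smul_one (k : ℤ) (φ : ℝ) :
    vecMulVec (nvec k φ) (nvec k φ) - (1 / 3 : ℝ) • (1 : Mat3) =
      qTensor (cos (k * φ) / 2) (sin (k * φ) / 2) (1 / 6) := by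
  have hdouble : 2 * (k * φ / 2) = k * φ := by ring
  have hcos : cos (k * φ / 2) * cos (k * φ / 2) = 1 / 2 + cos (k * φ) / 2 := by
    rw [← sq, cos_sq, hdouble]
  have hsin : sin (k * φ / 2) * sin (k * φ / 2) = 1 / 2 - cos (k * φ) / 2 := by
    rw [← sq, sin_sq_eq_half_sub, hdouble]
  have hcross : sin (k * φ / 2) * cos (k * φ / 2) = sin (k * φ) / 2 := by
    have := sin_two_mul (k * φ / 2)
    rw [hdouble] at this
    linarith
  ext i j
  fin_cases i <;> fin_cases j <;>
    simp [nvec, qTensor, hcos, hsin, hcross, mul_comm (cos _) (sin _)] <;> ring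

lemma E1_eq_qTensor (k : ℤ) (φ : ℝ) :
    E1 k φ = √2 • qTensor (cos (k * φ) / 2) (sin (k * φ) / 2) 0 := by
  rw [E1, ← sub_add_sub_cancel _ ((1 / 3 : ℝ) • (1 : Mat3)), vecMulVec_nvec_sub_smul_one]
  congr 1
  ext i j
  fin_cases i <;> fin_cases j <;> simp [I2, e3, qTensor] <;> ring

lemma E0_eq_qTensor : E0 = √(3 / 2) • qTensor 0 0 (-1 / 3) := by
  rw [E0]
  congr 1
  ext i j
  fin_cases i <;> fin_cases j <;> simp [e3, qTensor] <;> ring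

end QTensor

/-! ### The symmetric field carried by a radial profile -/

section ProfileField

lemma cos_natAbs_mul (k : ℤ) (φ : ℝ) : cos (k.natAbs * φ) = cos (k * φ) := by
  obtain ⟨n, rfl | rfl⟩ := k.eq_nat_or_neg <;> simp

lemma sign_mul_sin_natAbs_mul (k : ℤ) (φ : ℝ) :
    k.sign * sin (k.natAbs * φ) = sin (k * φ) := by
  obtain ⟨n, rfl | rfl⟩ := k.eq_nat_or_neg <;> rcases eq_or_ne n 0 with rfl | hn <;>
    simp [Int.sign_natCast_of_ne_zero, *]

lemma sq_sign_eq_one {k : ℤ} (hk : k ≠ 0) : (k.sign : ℝ) ^ 2 = 1 := by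
  rcases hk.lt_or_gt with h | h
  · simp [Int.sign_eq_neg_one_of_neg h]
  · simp [Int.sign_eq_one_of_pos h]

lemma splus_pos {a2 b2 c2 : ℝ} (hb : 0 < b2) (hc : 0 < c2) : 0 < splus a2 b2 c2 := by
  unfold splus
  positivity

lemma two_mul_splus_sq {a2 b2 c2 : ℝ} (ha : 0 < a2) (hc : 0 < c2) :
    2 * c2 * splus a2 b2 c2 ^ 2 = b2 * splus a2 b2 c2 + 3 * a2 := by
  have hsqrt := sq_sqrt (show 0 ≤ b2 ^ 2 + 24 * a2 * c2 by positivity)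
  unfold splus
  generalize √(b2 ^ 2 + 24 * a2 * c2) = w at hsqrt ⊢
  field_simp
  linear_combination 2 * hsqrt

lemma exists_splus_parametrization {a2 b2 c2 : ℝ} (ha : 0 < a2) (hb : 0 < b2) (hc : 0 < c2) :
    ∃ η : ℝ, |η| < 1 ∧ c2 * splus a2 b2 c2 ^ 2 * (1 - η) / 3 = a2 ∧
      c2 * splus a2 b2 c2 * (1 + η) = b2 := by
  have hs := splus_pos (a2 := a2) hb hc
  have hquad := two_mul_splus_sq (b2 := b2) ha hc
  set s := splus a2 b2 c2
  set η := b2 / (c2 * s) - 1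
  have hb2 : c2 * s * (1 + η) = b2 := by
    simp only [η]
    field_simp
    ring
  have ha2 : c2 * s ^ 2 * (1 - η) / 3 = a2 := by linear_combination (hquad - s * hb2) / 3
  refine ⟨η, abs_lt.2 ⟨?_, ?_⟩, ha2, hb2⟩
  · have := pos_of_mul_pos_right (hb2 ▸ hb) (by positivity)
    linarith
  · have := pos_of_mul_pos_right (a := c2 * s ^ 2) (b := 1 - η) (by linarith) (by positivity)
    linarith

/-- The coefficient `u` of `E1` in the field with amplitude profile `A`. -/
def inPlaneCoeff (κ : ℕ) (s : ℝ) (A : ℝ → ℝ) (r : ℝ) : ℝ := s / √2 * (r ^ κ * A (r ^ 2))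

/-- The coefficient `v` of `E0` in the field with biaxiality profile `q`. -/
def outOfPlaneCoeff (s η : ℝ) (q : ℝ → ℝ) (r : ℝ) : ℝ :=
  -(s / 2 * (1 - η + η * q (r ^ 2))) / √(3 / 2)

/-- The field `u E1 + v E0` in Cartesian coordinates, which are visibly smooth at the origin;
`κ = |k|`, and `σ` is the sign of `k`. -/
def profileField (κ : ℕ) (σ s η : ℝ) (A q : ℝ → ℝ) (x : ℝ × ℝ) : Mat3 :=
  qTensor (s / 2 * (A (x.1 ^ 2 + x.2 ^ 2) * Complex.reCLM (planeCoord x ^ κ)))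
    (s / 2 * (A (x.1 ^ 2 + x.2 ^ 2) * (σ • Complex.imCLM) (planeCoord x ^ κ)))
    (s / 6 * (1 - η + η * q (x.1 ^ 2 + x.2 ^ 2)))

variable {κ : ℕ} {k : ℤ} {σ s η ν β ε : ℝ} {A q : ℝ → ℝ}

lemma profileField_polar (r φ : ℝ) :
    profileField k.natAbs k.sign s η A q (r * cos φ, r * sin φ) =
      qTensor (s / 2 * (r ^ k.natAbs * A (r ^ 2) * cos (k * φ)))
        (s / 2 * (r ^ k.natAbs * A (r ^ 2) * sin (k * φ))) (s / 6 * (1 - η + η * q (r ^ 2))) := by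
  have hr : (r * cos φ) ^ 2 + (r * sin φ) ^ 2 = r ^ 2 := by
    linear_combination r ^ 2 * cos_sq_add_sin_sq φ
  simp only [profileField, hr, planeCoord_polar_pow, ← cos_natAbs_mul k,
    ← sign_mul_sin_natAbs_mul k, Complex.add_re, Complex.add_im, Complex.ofReal_re,
    Complex.ofReal_im, Complex.re_ofReal_mul, Complex.im_ofReal_mul, Complex.I_re, Complex.I_im,
    _root_.smul_apply, Complex.reCLM_apply, Complex.imCLM_apply, smul_eq_mul]
  congr 1 <;> ring

lemma profileField_polar_eq_smul_E1_add_smul_E0 (r φ : ℝ) :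
    profileField k.natAbs k.sign s η A q (r * cos φ, r * sin φ) =
      inPlaneCoeff k.natAbs s A r • E1 k φ + outOfPlaneCoeff s η q r • E0 := by
  rw [profileField_polar, E1_eq_qTensor, E0_eq_qTensor]
  simp only [smul_qTensor, qTensor_add, inPlaneCoeff, outOfPlaneCoeff]
  congr 1 <;> field_simp <;> ring

lemma isS0_profileField (x : ℝ × ℝ) : isS0 (profileField κ σ s η A q x) := isS0_qTensor _ _ _

lemma frobSq_profileField_polar_sub (r φ : ℝ) :
    frobSq (profileField k.natAbs k.sign s η A q (r * cos φ, r * sin φ) -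
      s • (vecMulVec (nvec k φ) (nvec k φ) - (1 / 3 : ℝ) • (1 : Mat3))) =
      s ^ 2 / 2 * (r ^ k.natAbs * A (r ^ 2) - 1) ^ 2 +
        s ^ 2 / 6 * (η ^ 2 * (q (r ^ 2) - 1) ^ 2) := by
  rw [profileField_polar, vecMulVec_nvec_sub_smul_one, smul_qTensor, qTensor_sub, frobSq_qTensor]
  linear_combination s ^ 2 / 2 * (r ^ k.natAbs * A (r ^ 2) - 1) ^ 2 * cos_sq_add_sin_sq (k * φ)

lemma sq_sub_one_le_one_sub {l P : ℝ} (hl : l ∈ Icc 0 1) (hP : 0 ≤ P)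
    (hP2 : P ^ 2 ∈ Icc (l * (4 - l) / 3) 1) : (P - 1) ^ 2 ≤ 1 - l := by
  have hP1 : P ≤ 1 := (sq_le_one_iff₀ hP).1 hP2.2
  have hlP : l ≤ P ^ 2 := by nlinarith [hl.1, hl.2, hP2.1]
  nlinarith

namespace IsRadialProfile

lemma contDiff_profileField (h : IsRadialProfile κ ν η β A q) (i j : Fin 3) :
    ContDiff ℝ (⊤ : ℕ∞) fun x => profileField κ σ s η A q x i j := by
  have hsq : ContDiff ℝ (⊤ : ℕ∞) fun x : ℝ × ℝ => x.1 ^ 2 + x.2 ^ 2 := by fun_prop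
  have hA := HasContDiffExtension.contDiff_comp h.extension_amplitude hsq fun x => by positivity
  have hq := HasContDiffExtension.contDiff_comp h.extension_biaxiality hsq fun x => by positivity
  exact contDiff_qTensor_apply
    (contDiff_const.mul (hA.mul (contDiff_clm_planeCoord_pow Complex.reCLM κ)))
    (contDiff_const.mul (hA.mul (contDiff_clm_planeCoord_pow (σ • Complex.imCLM) κ)))
    (contDiff_const.mul (contDiff_const.add (contDiff_const.mul hq))) i j

lemma contDiff_inPlaneCoeff (h : IsRadialProfile κ ν η β A q) :
    ContDiff ℝ (⊤ : ℕ∞) (inPlaneCoeff κ s A) :=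
  contDiff_const.mul ((contDiff_id.pow κ).mul
    (HasContDiffExtension.contDiff_comp h.extension_amplitude (contDiff_id.pow 2) sq_nonneg))

lemma contDiff_outOfPlaneCoeff (h : IsRadialProfile κ ν η β A q) :
    ContDiff ℝ (⊤ : ℕ∞) (outOfPlaneCoeff s η q) :=
  (contDiff_const.mul (contDiff_const.add (contDiff_const.mul
    (HasContDiffExtension.contDiff_comp h.extension_biaxiality (contDiff_id.pow 2)
      sq_nonneg)))).neg.div_const _

lemma inPlaneCoeff_pos (h : IsRadialProfile κ ν η β A q) (hs : 0 < s) {r : ℝ} (hr : 0 < r) :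
    0 < inPlaneCoeff κ s A r := by
  have := h.amplitude_pos (r ^ 2) (by positivity)
  unfold inPlaneCoeff
  positivity

lemma outOfPlaneCoeff_neg (h : IsRadialProfile κ ν η β A q) (hs : 0 < s) (hη : |η| < 1) {r : ℝ}
    (hr : 0 < r) : outOfPlaneCoeff s η q r < 0 := by
  obtain ⟨hη1, hη2⟩ := abs_lt.1 hη
  have hz : 0 < r ^ 2 := by positivity
  have hq := h.biaxiality_mem (r ^ 2) hz
  have hq0 := (lowerBiaxial_pos (κ := κ) h.pos hz).trans_le hq.1
  have hv : 0 < 1 - η + η * q (r ^ 2) := by nlinarith [hq.2]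
  unfold outOfPlaneCoeff
  rw [neg_div, neg_lt_zero]
  positivity

lemma matLap_profileField {c2 : ℝ} (h : IsRadialProfile κ (c2 * s ^ 2 / 8) η β A q)
    (hσ : σ ^ 2 = 1) (x : ℝ × ℝ) :
    matLap (profileField κ σ s η A q) x =
      ELrhs (c2 * s ^ 2 * (1 - η) / 3) (c2 * s * (1 + η)) c2 (profileField κ σ s η A q x) := by
  have hA := h.contDiff_amplitude
  have hq := h.contDiff_biaxiality
  have hz : 0 ≤ x.1 ^ 2 + x.2 ^ 2 := by positivity
  have hpow : (x.1 ^ 2 + x.2 ^ 2) ^ κ =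
      (planeCoord x ^ κ).re ^ 2 + (planeCoord x ^ κ).im ^ 2 := by
    rw [← normSq_planeCoord, ← map_pow, Complex.normSq_apply]
    ring
  have := contDiff_clm_planeCoord_pow Complex.reCLM κ (m := 2)
  unfold profileField
  rw [matLap_qTensor (by fun_prop) (by fun_prop), ELrhs_qTensor, lap_const_mul, lap_const_mul,
    lap_const_mul, lap_add (by fun_prop) (by fun_prop), lap_const, lap_const_mul,
    lap_radial_mul_clm_planeCoord_pow hA, lap_radial_mul_clm_planeCoord_pow hA, lap_radial hq,
    h.radialOp_amplitude _ hz, h.radialOp_biaxiality _ hz]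
  simp only [amplitudeTerm, biaxialTerm, hpow, _root_.smul_apply, Complex.reCLM_apply,
    Complex.imCLM_apply, smul_eq_mul, mul_pow, hσ]
  congr 1 <;> ring

lemma frobSq_profileField_sub_le (h : IsRadialProfile k.natAbs ν η β A q) (hη : |η| < 1) {r : ℝ}
    (hr : 0 < r) (φ : ℝ) :
    frobSq (profileField k.natAbs k.sign s η A q (r * cos φ, r * sin φ) -
      s • (vecMulVec (nvec k φ) (nvec k φ) - (1 / 3 : ℝ) • (1 : Mat3))) ≤
      s ^ 2 * (k.natAbs * β) / r ^ 2 := by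
  have hz : 0 < r ^ 2 := by positivity
  have hβ := h.pos
  have hl := lowerBiaxial_mem_Icc (κ := k.natAbs) hβ hz.le
  have hrate : 1 - lowerBiaxial k.natAbs β (r ^ 2) ≤ k.natAbs * β / r ^ 2 := by
    refine (one_sub_lowerBiaxial_le hβ hz.le).trans ?_
    rw [decay, mul_div_assoc]
    gcongr
    linarith
  obtain ⟨hlq, hq1⟩ := h.biaxiality_mem _ hz
  have hP := h.pow_mul_amplitude_sq_mem _ hz
  rw [show (r ^ 2) ^ k.natAbs * A (r ^ 2) ^ 2 = (r ^ k.natAbs * A (r ^ 2)) ^ 2 by ring] at hP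
  have hA := h.amplitude_pos _ hz
  rw [frobSq_profileField_polar_sub, mul_div_assoc]
  generalize lowerBiaxial k.natAbs β (r ^ 2) = l at *
  have hamp := sq_sub_one_le_one_sub hl (by positivity) hP
  have hbiax : η ^ 2 * (q (r ^ 2) - 1) ^ 2 ≤ 1 - l := by
    have hη2 : η ^ 2 ≤ 1 := (sq_le_one_iff_abs_le_one η).2 hη.le
    have hq2 : (q (r ^ 2) - 1) ^ 2 ≤ 1 - l := by nlinarith [hl.1]
    nlinarith [sq_nonneg (q (r ^ 2) - 1)]
  calc s ^ 2 / 2 * (r ^ k.natAbs * A (r ^ 2) - 1) ^ 2 +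
        s ^ 2 / 6 * (η ^ 2 * (q (r ^ 2) - 1) ^ 2)
      ≤ s ^ 2 / 2 * (1 - l) + s ^ 2 / 6 * (1 - l) := by gcongr
    _ ≤ s ^ 2 * (1 - l) := by nlinarith [mul_nonneg (sq_nonneg s) (sub_nonneg.2 hl.2)]
    _ ≤ s ^ 2 * (k.natAbs * β / r ^ 2) := by gcongr

lemma exists_forall_frobSq_profileField_sub_lt (h : IsRadialProfile k.natAbs ν η β A q)
    (hη : |η| < 1) (hε : 0 < ε) :
    ∃ M : ℝ, ∀ r φ : ℝ, M ≤ r →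
      frobSq (profileField k.natAbs k.sign s η A q (r * cos φ, r * sin φ) -
        s • (vecMulVec (nvec k φ) (nvec k φ) - (1 / 3 : ℝ) • (1 : Mat3))) < ε := by
  have hdecay : Tendsto (fun r : ℝ => s ^ 2 * (k.natAbs * β) / r ^ 2) atTop (𝓝 0) :=
    tendsto_const_nhds.div_atTop (tendsto_pow_atTop two_ne_zero)
  obtain ⟨M, hM⟩ := eventually_atTop.1
    ((hdecay.eventually_lt_const hε).and (eventually_gt_atTop 0))
  exact ⟨M, fun r φ hr => (h.frobSq_profileField_sub_le hη (hM r hr).2 φ).trans_lt (hM r hr).1⟩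

end IsRadialProfile

end ProfileField

end

/-- existence of a smooth `k`-radially symmetric solution
`Q = u(r)E₁(φ) + v(r)E₀` of the Euler–Lagrange equation on `ℝ²` with `u > 0`, `v < 0`
and `Q(x) → s₊(n(x)⊗n(x) − (1/3)I₃)` as `|x| → ∞`. -/
theorem stmt17 (a2 b2 c2 : ℝ) (ha : 0 < a2) (hb : 0 < b2) (hc : 0 < c2)
    (k : ℤ) (hk : k ≠ 0) :
    ∃ (u v : ℝ → ℝ) (Q : ℝ × ℝ → Mat3),
      ContDiffOn ℝ 2 u (Set.Ici 0) ∧ ContDiffOn ℝ (⊤ : ℕ∞) u (Set.Ioi 0) ∧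
      ContDiffOn ℝ (⊤ : ℕ∞) v (Set.Ici 0) ∧
      (∀ r : ℝ, 0 < r → 0 < u r ∧ v r < 0) ∧
      (∀ r φ : ℝ, 0 ≤ r →
        Q (r * Real.cos φ, r * Real.sin φ) = u r • E1 k φ + v r • E0) ∧
      (∀ i j, ContDiff ℝ (⊤ : ℕ∞) (fun x => Q x i j)) ∧
      (∀ x, isS0 (Q x)) ∧
      (∀ x, matLap Q x = ELrhs a2 b2 c2 (Q x)) ∧
      (∀ ε : ℝ, 0 < ε → ∃ M : ℝ, ∀ r φ : ℝ, M ≤ r →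
        frobSq (Q (r * Real.cos φ, r * Real.sin φ)
          - splus a2 b2 c2 • (vecMulVec (nvec k φ) (nvec k φ) - (1/3 : ℝ) • (1 : Mat3))) < ε) := by
  obtain ⟨η, hη, ha2, hb2⟩ := exists_splus_parametrization ha hb hc
  have hs := splus_pos (a2 := a2) hb hc
  obtain ⟨β, A, q, h⟩ := exists_isRadialProfile (Int.natAbs_ne_zero.2 hk)
    (by positivity : 0 < c2 * splus a2 b2 c2 ^ 2 / 8) hη
  refine ⟨inPlaneCoeff k.natAbs (splus a2 b2 c2) A, outOfPlaneCoeff (splus a2 b2 c2) η q,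
    profileField k.natAbs k.sign (splus a2 b2 c2) η A q,
    (contDiff_infty.1 h.contDiff_inPlaneCoeff 2).contDiffOn,
    h.contDiff_inPlaneCoeff.contDiffOn, h.contDiff_outOfPlaneCoeff.contDiffOn,
    fun r hr => ⟨h.inPlaneCoeff_pos hs hr, h.outOfPlaneCoeff_neg hs hη hr⟩,
    fun r φ _ => profileField_polar_eq_smul_E1_add_smul_E0 r φ, h.contDiff_profileField,
    isS0_profileField, fun x => ?_, fun ε hε => h.exists_forall_frobSq_profileField_sub_lt hη hε⟩
  rw [h.matLap_profileField (sq_sign_eq_one hk), ha2, hb2]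
end
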